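/- arXiv:2303.05421 — 13 statements merged into one kernel-verified Lean document; each statement's English description precedes it below -/
import Mathlib

section
/- (Monotonicity of the mapping φ₁, part of Lemma 3.6.) Let α¹, α² ∈ ℝ_{>0}^n with α¹_i ≥ α²_i for every i. Then J(s; α¹) ≥ J(s; α²) for every s ∈ A. Moreover, if in addition α¹ ≠ α², then J(s; α¹) > J(s; α²) for every s ∈ A with s > 0. -/
open Set Filter Topology

/-!
For fixed weights the aggregate `z ↦ ∑ i, I i (z / α i)` increases with `z`, and for fixed `z` it
decreases as the weights increase. After the weights are raised, the old solution `z` therefore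
yields at most the prescribed total, so the new solution cannot lie below it. At `z > 0`, raising
even one weight strictly lowers the total.
-/

/-- The total response `∑ i, I i (z / α i)` of participants with inverse marginal disutilities `I i`
and weights `α i` to the level `z`. The paper's `J(s; α)` is its inverse in `z`, for fixed `α`. -/
def aggregate {ι 𝕜 E : Type*} [Fintype ι] [Div 𝕜] [AddCommMonoid E]
    (I : ι → 𝕜 → E) (α : ι → 𝕜) (z : 𝕜) : E :=
  ∑ i, I i (z / α i)

section Aggregate

variable {ι 𝕜 E : Type*} [Fintype ι] [Field 𝕜] [AddCommMonoid E] {I : ι → 𝕜 → E}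

theorem aggregate_zero (α : ι → 𝕜) : aggregate I α 0 = ∑ i, I i 0 := by
  simp [aggregate]

variable [LinearOrder 𝕜] [IsStrictOrderedRing 𝕜] [PartialOrder E]

theorem antitoneOn_aggregate_weights [IsOrderedAddMonoid E]
    (hI : ∀ i, MonotoneOn (I i) (Ici 0)) {z : 𝕜} (hz : 0 ≤ z) :
    AntitoneOn (fun α ↦ aggregate I α z) {α | ∀ i, 0 < α i} :=
  fun _ hα _ hβ hle ↦ Finset.sum_le_sum fun i _ ↦
    hI i (div_nonneg hz (hβ i).le) (div_nonneg hz (hα i).le)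
      (div_le_div_of_nonneg_left hz (hα i) (hle i))

variable [IsOrderedCancelAddMonoid E]

theorem strictAntiOn_aggregate_weights
    (hI : ∀ i, StrictMonoOn (I i) (Ici 0)) {z : 𝕜} (hz : 0 < z) :
    StrictAntiOn (fun α ↦ aggregate I α z) {α | ∀ i, 0 < α i} := by
  intro α hα β hβ hlt
  obtain ⟨hle, i, hi⟩ := Pi.lt_def.mp hlt
  have div_mem (γ : ι → 𝕜) (hγ : ∀ j, 0 < γ j) (j : ι) : z / γ j ∈ Ici 0 :=
    (div_pos hz (hγ j)).le
  exact Finset.sum_lt_sum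
    (fun j _ ↦ (hI j).monotoneOn (div_mem β hβ j) (div_mem α hα j)
      (div_le_div_of_nonneg_left hz.le (hα j) (hle j)))
    ⟨i, Finset.mem_univ i, hI i (div_mem β hβ i) (div_mem α hα i)
      (div_lt_div_of_pos_left hz (hα i) hi)⟩

theorem strictMonoOn_aggregate [Nonempty ι]
    (hI : ∀ i, StrictMonoOn (I i) (Ici 0)) {α : ι → 𝕜} (hα : ∀ i, 0 < α i) :
    StrictMonoOn (aggregate I α) (Ici 0) :=
  fun _ hz _ hw hlt ↦ Finset.sum_lt_sum_of_nonempty Finset.univ_nonempty fun i _ ↦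
    hI i (div_nonneg hz (hα i).le) (div_nonneg hw (hα i).le) (div_lt_div_of_pos_right hlt (hα i))

variable [Nonempty ι] {A : Set E} {J : (ι → 𝕜) → E → 𝕜} {α₁ α₂ : ι → 𝕜}

theorem stmt_2_general (hI : ∀ i, StrictMonoOn (I i) (Ici 0))
    (hJ : ∀ α : ι → 𝕜, (∀ i, 0 < α i) → ∀ s ∈ A, 0 ≤ J α s ∧ aggregate I α (J α s) = s)
    (hα₁ : ∀ i, 0 < α₁ i) (hα₂ : ∀ i, 0 < α₂ i) (hle : α₂ ≤ α₁) :
    (∀ s ∈ A, J α₂ s ≤ J α₁ s) ∧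
    (α₁ ≠ α₂ → ∀ s ∈ A, ∑ i, I i 0 < s → J α₂ s < J α₁ s) := by
  have mono := strictMonoOn_aggregate hI hα₁
  refine ⟨fun s hs ↦ ?_, fun hne s hs hpos ↦ ?_⟩
  all_goals
    obtain ⟨h₁, e₁⟩ := hJ α₁ hα₁ s hs
    obtain ⟨h₂, e₂⟩ := hJ α₂ hα₂ s hs
  · refine (mono.le_iff_le h₂ h₁).mp ?_
    calc aggregate I α₁ (J α₂ s)
        ≤ aggregate I α₂ (J α₂ s) :=
          antitoneOn_aggregate_weights (fun i ↦ (hI i).monotoneOn) h₂ hα₂ hα₁ hle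
      _ = aggregate I α₁ (J α₁ s) := e₂.trans e₁.symm
  · have J_pos : 0 < J α₂ s := h₂.lt_of_ne fun h ↦ hpos.ne <| by
      rw [← aggregate_zero α₂, h, e₂]
    refine (mono.lt_iff_lt h₂ h₁).mp ?_
    calc aggregate I α₁ (J α₂ s)
        < aggregate I α₂ (J α₂ s) :=
          strictAntiOn_aggregate_weights hI J_pos hα₂ hα₁ (lt_of_le_of_ne hle hne.symm)
      _ = aggregate I α₁ (J α₁ s) := e₂.trans e₁.symm

end Aggregate

/-- monotonicity of φ₁, part of Lemma 3.6: if `α¹ ≥ α²`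
componentwise then `J(s; α¹) ≥ J(s; α²)` for all `s ∈ A`, with strict
inequality for `s > 0` whenever `α¹ ≠ α²`. -/
theorem stmt_2
    (n : ℕ) (hn : 1 ≤ n) (M : Fin n → ℝ) (hM : ∀ i, 0 < M i)
    (I : Fin n → ℝ → ℝ)
    (hIcont : ∀ i, ContinuousOn (I i) (Ici 0))
    (hImono : ∀ i, StrictMonoOn (I i) (Ici 0))
    (hI0 : ∀ i, I i 0 = 0)
    (hIlt : ∀ i z, 0 ≤ z → I i z < M i)
    (hIlim : ∀ i, Tendsto (I i) atTop (𝓝 (M i)))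
    -- `J α s` is the unique nonnegative solution `z` of `∑ i, I i (z / α i) = s`
    (J : (Fin n → ℝ) → ℝ → ℝ)
    (hJ : ∀ α : Fin n → ℝ, (∀ i, 0 < α i) → ∀ s ∈ Ico 0 (∑ i, M i),
      0 ≤ J α s ∧ ∑ i, I i (J α s / α i) = s)
    (α₁ α₂ : Fin n → ℝ) (hα₁ : ∀ i, 0 < α₁ i) (hα₂ : ∀ i, 0 < α₂ i)
    (hle : ∀ i, α₂ i ≤ α₁ i) :
    (∀ s ∈ Ico 0 (∑ i, M i), J α₂ s ≤ J α₁ s) ∧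
    (α₁ ≠ α₂ → ∀ s ∈ Ico 0 (∑ i, M i), 0 < s → J α₂ s < J α₁ s) := by
  have : Nonempty (Fin n) := ⟨⟨0, hn⟩⟩
  simpa only [hI0, Finset.sum_const_zero] using stmt_2_general hImono hJ hα₁ hα₂ hle
end

section
/- (Continuity of the mapping φ₁, part of Lemma 3.6.) Let (α^k)_{k≥1} be a sequence in ℝ_{>0}^n converging to α ∈ ℝ_{>0}^n. Then for every s ∈ A, J(s; α^k) → J(s; α) as k → ∞. -/
open Set Filter Topology

/-!
If `z` and `w` solve `∑ i, f i (z / β i) = ∑ i, f i (w / α i)` with each `f i` strictly increasing,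
then `z / β i` cannot lie on the same strict side of `w / α i` for every `i`. Hence `z` lies between
the smallest and the largest of the numbers `w / α i * β i`, all of which tend to `w` as `β → α`.
-/

section Comparison

variable {ι X Y : Type*}

theorem exists_le_of_sum_le_sum_of_strictMonoOn [Fintype ι] [Nonempty ι] [LinearOrder X]
    [AddCommMonoid Y] [LinearOrder Y] [IsOrderedCancelAddMonoid Y] {f : ι → X → Y} {s : ι → Set X}
    (hf : ∀ i, StrictMonoOn (f i) (s i)) {x y : ι → X} (hx : ∀ i, x i ∈ s i) (hy : ∀ i, y i ∈ s i)
    (hxy : ∑ i, f i (x i) ≤ ∑ i, f i (y i)) : ∃ i, x i ≤ y i := by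
  obtain ⟨i, -, hi⟩ := Finset.exists_le_of_sum_le Finset.univ_nonempty hxy
  exact ⟨i, ((hf i).le_iff_le (hx i) (hy i)).1 hi⟩

theorem tendsto_of_eventually_exists_le_of_eventually_exists_ge [Finite ι] [Preorder X]
    [TopologicalSpace X] [OrderTopology X] {l : Filter Y} {u : ι → Y → X} {v : Y → X} {x : X}
    (hu : ∀ i, Tendsto (u i) l (𝓝 x)) (hle : ∀ᶠ y in l, ∃ i, u i y ≤ v y)
    (hge : ∀ᶠ y in l, ∃ i, v y ≤ u i y) : Tendsto v l (𝓝 x) := by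
  refine tendsto_order.2 ⟨fun a ha => ?_, fun a ha => ?_⟩
  · filter_upwards [hle, eventually_all.2 fun i => (tendsto_order.1 (hu i)).1 a ha]
      with y ⟨i, hi⟩ hlt using (hlt i).trans_le hi
  · filter_upwards [hge, eventually_all.2 fun i => (tendsto_order.1 (hu i)).2 a ha]
      with y ⟨i, hi⟩ hlt using hi.trans_lt (hlt i)

end Comparison

theorem stmt_3_general {ι κ 𝕜 Y : Type*} [Fintype ι] [Nonempty ι]
    [Field 𝕜] [LinearOrder 𝕜] [IsStrictOrderedRing 𝕜] [TopologicalSpace 𝕜] [OrderTopology 𝕜]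
    [AddCommMonoid Y] [LinearOrder Y] [IsOrderedCancelAddMonoid Y]
    {f : ι → 𝕜 → Y} (hf : ∀ i, StrictMonoOn (f i) (Ici 0))
    {α : ι → 𝕜} (hα : ∀ i, 0 < α i) {w : 𝕜} (hw : 0 ≤ w)
    {l : Filter κ} {β : κ → ι → 𝕜} (hβ : Tendsto β l (𝓝 α))
    {z : κ → 𝕜} (hz : ∀ᶠ k in l, 0 ≤ z k)
    (hzw : ∀ᶠ k in l, ∑ i, f i (z k / β k i) = ∑ i, f i (w / α i)) :
    Tendsto z l (𝓝 w) := by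
  have hβi : ∀ i, Tendsto (fun k => β k i) l (𝓝 (α i)) := tendsto_pi_nhds.1 hβ
  have hβpos : ∀ᶠ k in l, ∀ i, 0 < β k i :=
    eventually_all.2 fun i => (hβi i).eventually_const_lt (hα i)
  have hlim (i : ι) : Tendsto (fun k => w / α i * β k i) l (𝓝 w) := by
    simpa only [div_mul_cancel₀ w (hα i).ne'] using (hβi i).const_mul (w / α i)
  have hwα (i : ι) : w / α i ∈ Ici 0 := div_nonneg hw (hα i).le
  refine tendsto_of_eventually_exists_le_of_eventually_exists_ge hlim ?_ ?_
  · filter_upwards [hβpos, hz, hzw] with k hpos hzk hk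
    obtain ⟨i, hi⟩ := exists_le_of_sum_le_sum_of_strictMonoOn hf hwα
      (fun i => div_nonneg hzk (hpos i).le) hk.ge
    exact ⟨i, (le_div_iff₀ (hpos i)).1 hi⟩
  · filter_upwards [hβpos, hz, hzw] with k hpos hzk hk
    obtain ⟨i, hi⟩ := exists_le_of_sum_le_sum_of_strictMonoOn hf
      (fun i => div_nonneg hzk (hpos i).le) hwα hk.le
    exact ⟨i, (div_le_iff₀ (hpos i)).1 hi⟩

/-- continuity of φ₁, part of Lemma 3.6: if `α^k → α` in
`ℝ_{>0}^n`, then `J(s; α^k) → J(s; α)` for every `s ∈ A`. -/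
theorem stmt_3
    (n : ℕ) (hn : 1 ≤ n) (M : Fin n → ℝ) (hM : ∀ i, 0 < M i)
    (I : Fin n → ℝ → ℝ)
    (hIcont : ∀ i, ContinuousOn (I i) (Ici 0))
    (hImono : ∀ i, StrictMonoOn (I i) (Ici 0))
    (hI0 : ∀ i, I i 0 = 0)
    (hIlt : ∀ i z, 0 ≤ z → I i z < M i)
    (hIlim : ∀ i, Tendsto (I i) atTop (𝓝 (M i)))
    -- `J α s` is the unique nonnegative solution `z` of `∑ i, I i (z / α i) = s`
    (J : (Fin n → ℝ) → ℝ → ℝ)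
    (hJ : ∀ α : Fin n → ℝ, (∀ i, 0 < α i) → ∀ s ∈ Ico 0 (∑ i, M i),
      0 ≤ J α s ∧ ∑ i, I i (J α s / α i) = s)
    (αk : ℕ → Fin n → ℝ) (hαk : ∀ k i, 0 < αk k i)
    (α : Fin n → ℝ) (hα : ∀ i, 0 < α i)
    (hconv : Tendsto αk atTop (𝓝 α)) :
    ∀ s ∈ Ico 0 (∑ i, M i),
      Tendsto (fun k => J (αk k) s) atTop (𝓝 (J α s)) := by
  have : Nonempty (Fin n) := ⟨⟨0, hn⟩⟩
  exact fun s hs => stmt_3_general hImono hα (hJ α hα s hs).1 hconv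
    (.of_forall fun k => (hJ _ (hαk k) s hs).1)
    (.of_forall fun k => (hJ _ (hαk k) s hs).2.trans (hJ α hα s hs).2.symm)
end

section
/- (Lemma 3.7, non-sectionality property of φ₁.) Let Q and R be nonempty complementary subsets of the index set {1, …, n}, fix positive numbers α_i > 0 for i ∈ Q, and let (α^k)_{k≥1} be a sequence in ℝ_{>0}^n such that α^k_i = α_i for all i ∈ Q and all k, while α^k_i → ∞ as k → ∞ for every i ∈ R. Then for every s ∈ A with s ≥ Σ_{i∈Q} M_i, one has J(s; α^k) → ∞ as k → ∞. -/
open Set Filter Topology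

/-!
Fix `b ≥ 0`. Participants in `Q` respond to the level `b` by an amount bounded strictly below their
caps, uniformly in `k`, while the arguments `b / α k i` of the others tend to `0`, so that their
responses die out by continuity at `0`. Hence the total response to `b` is eventually smaller than
the sum of the caps over `Q`, and a level whose total response reaches that sum must, by
monotonicity, exceed `b`.
-/

section TotalResponse

variable {ι κ : Type*} {l : Filter κ} {I : ι → ℝ → ℝ} {b : ℝ}

lemma tendsto_comp_const_div_of_tendsto_atTop {f : ℝ → ℝ} {a : κ → ℝ}
    (hf : ContinuousWithinAt f (Ici 0) 0) (hb : 0 ≤ b) (ha : Tendsto a l atTop) :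
    Tendsto (fun k => f (b / a k)) l (𝓝 (f 0)) := by
  refine hf.tendsto.comp (tendsto_nhdsWithin_iff.2 ⟨ha.const_div_atTop b, ?_⟩)
  filter_upwards [ha.eventually_ge_atTop 0] with k hk using div_nonneg hb hk

lemma monotoneOn_sum_comp_div {s : Finset ι} {a : ι → ℝ}
    (hI : ∀ i ∈ s, MonotoneOn (I i) (Ici 0)) (ha : ∀ i ∈ s, 0 ≤ a i) :
    MonotoneOn (fun z => ∑ i ∈ s, I i (z / a i)) (Ici 0) :=
  fun _ hx _ hy hxy => Finset.sum_le_sum fun i hi =>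
    hI i hi (div_nonneg hx (ha i hi)) (div_nonneg hy (ha i hi))
      (div_le_div_of_nonneg_right hxy (ha i hi))

lemma sum_comp_div_le_of_le {s : Finset ι} {a a' : ι → ℝ}
    (hI : ∀ i ∈ s, MonotoneOn (I i) (Ici 0)) (hb : 0 ≤ b) (ha : ∀ i ∈ s, 0 < a i)
    (haa' : ∀ i ∈ s, a i ≤ a' i) :
    ∑ i ∈ s, I i (b / a' i) ≤ ∑ i ∈ s, I i (b / a i) :=
  Finset.sum_le_sum fun i hi =>
    hI i hi (div_nonneg hb ((ha i hi).le.trans (haa' i hi))) (div_nonneg hb (ha i hi).le)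
      (div_le_div_of_nonneg_left hb (ha i hi) (haa' i hi))

variable {M a : ι → ℝ} {Q : Finset ι} {α : κ → ι → ℝ}

lemma eventually_nonneg_of_le_of_tendsto_atTop [Finite ι]
    (ha : ∀ i ∈ Q, 0 < a i) (hα : ∀ i ∈ Q, ∀ᶠ k in l, a i ≤ α k i)
    (hinf : ∀ i ∉ Q, Tendsto (fun k => α k i) l atTop) :
    ∀ᶠ k in l, ∀ i, 0 ≤ α k i := by
  refine eventually_all.2 fun i => ?_
  by_cases hi : i ∈ Q
  · filter_upwards [hα i hi] with k hk using (ha i hi).le.trans hk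
  · exact (hinf i hi).eventually_ge_atTop 0

variable [Fintype ι]

lemma eventually_sum_comp_div_lt_sum
    (hmono : ∀ i ∈ Q, MonotoneOn (I i) (Ici 0))
    (hlt : ∀ i ∈ Q, ∀ z, 0 ≤ z → I i z < M i)
    (hcont : ∀ i ∉ Q, ContinuousWithinAt (I i) (Ici 0) 0)
    (hzero : ∀ i ∉ Q, I i 0 = 0)
    (hQ : Q.Nonempty) (ha : ∀ i ∈ Q, 0 < a i)
    (hα : ∀ i ∈ Q, ∀ᶠ k in l, a i ≤ α k i)
    (hinf : ∀ i ∉ Q, Tendsto (fun k => α k i) l atTop) (hb : 0 ≤ b) :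
    ∀ᶠ k in l, ∑ i, I i (b / α k i) < ∑ i ∈ Q, M i := by
  classical
  have hgap : ∑ i ∈ Q, I i (b / a i) < ∑ i ∈ Q, M i :=
    Finset.sum_lt_sum_of_nonempty hQ fun i hi => hlt i hi _ (div_nonneg hb (ha i hi).le)
  have hvanish : Tendsto (fun k => ∑ i ∈ Qᶜ, I i (b / α k i)) l (𝓝 0) := by
    rw [← Finset.sum_eq_zero fun i hi => hzero i (Finset.mem_compl.1 hi)]
    refine tendsto_finsetSum _ fun i hi => ?_
    rw [Finset.mem_compl] at hi
    exact tendsto_comp_const_div_of_tendsto_atTop (hcont i hi) hb (hinf i hi)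
  filter_upwards [Q.eventually_all.2 hα, hvanish.eventually_lt_const (sub_pos.2 hgap)]
    with k hαk hsmall
  calc ∑ i, I i (b / α k i)
      = ∑ i ∈ Q, I i (b / α k i) + ∑ i ∈ Qᶜ, I i (b / α k i) := (Q.sum_add_sum_compl _).symm
    _ ≤ ∑ i ∈ Q, I i (b / a i) + ∑ i ∈ Qᶜ, I i (b / α k i) := by
      gcongr 1
      exact sum_comp_div_le_of_le hmono hb ha hαk
    _ < ∑ i ∈ Q, M i := by linarith

theorem stmt_4_general
    (hmono : ∀ i, MonotoneOn (I i) (Ici 0))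
    (hlt : ∀ i ∈ Q, ∀ z, 0 ≤ z → I i z < M i)
    (hcont : ∀ i ∉ Q, ContinuousWithinAt (I i) (Ici 0) 0)
    (hzero : ∀ i ∉ Q, I i 0 = 0)
    (hQ : Q.Nonempty) (ha : ∀ i ∈ Q, 0 < a i)
    (hα : ∀ i ∈ Q, ∀ᶠ k in l, a i ≤ α k i)
    (hinf : ∀ i ∉ Q, Tendsto (fun k => α k i) l atTop)
    {z : κ → ℝ} (hz : ∀ᶠ k in l, 0 ≤ z k)
    (hsum : ∀ᶠ k in l, ∑ i ∈ Q, M i ≤ ∑ i, I i (z k / α k i)) :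
    Tendsto z l atTop := by
  refine (atTop_basis' (0 : ℝ)).tendsto_right_iff.2 fun b hb => ?_
  filter_upwards [eventually_sum_comp_div_lt_sum (fun i _ => hmono i) hlt hcont hzero hQ ha hα
      hinf hb, eventually_nonneg_of_le_of_tendsto_atTop ha hα hinf, hz, hsum]
    with k hbk hαk hzk hsumk
  have hmonok := monotoneOn_sum_comp_div (s := Finset.univ) (fun i _ => hmono i) fun i _ => hαk i
  exact (hmonok.reflect_lt hb hzk (hbk.trans_le hsumk)).le

end TotalResponse

/-- Lemma 3.7, non-sectionality property of φ₁: if the weights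
with indices in `Q` are held fixed and positive while those with indices in the
complementary set tend to infinity, then `J(s; α^k) → ∞` for every `s ∈ A`
with `s ≥ ∑_{i ∈ Q} M i`. -/
theorem stmt_4
    (n : ℕ) (hn : 2 ≤ n) (M : Fin n → ℝ) (hM : ∀ i, 0 < M i)
    (I : Fin n → ℝ → ℝ)
    (hIcont : ∀ i, ContinuousOn (I i) (Ici 0))
    (hImono : ∀ i, StrictMonoOn (I i) (Ici 0))
    (hI0 : ∀ i, I i 0 = 0)
    (hIlt : ∀ i z, 0 ≤ z → I i z < M i)
    (hIlim : ∀ i, Tendsto (I i) atTop (𝓝 (M i)))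
    -- `J α s` is the unique nonnegative solution `z` of `∑ i, I i (z / α i) = s`
    (J : (Fin n → ℝ) → ℝ → ℝ)
    (hJ : ∀ α : Fin n → ℝ, (∀ i, 0 < α i) → ∀ s ∈ Ico 0 (∑ i, M i),
      0 ≤ J α s ∧ ∑ i, I i (J α s / α i) = s)
    (Q : Finset (Fin n)) (hQ : Q.Nonempty) (hR : Qᶜ.Nonempty)
    (α : Fin n → ℝ) (hα : ∀ i ∈ Q, 0 < α i)
    (αk : ℕ → Fin n → ℝ) (hαkpos : ∀ k i, 0 < αk k i)
    (hfix : ∀ k, ∀ i ∈ Q, αk k i = α i)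
    (hinf : ∀ i ∉ Q, Tendsto (fun k => αk k i) atTop atTop) :
    ∀ s ∈ Ico 0 (∑ i, M i), (∑ i ∈ Q, M i) ≤ s →
      Tendsto (fun k => J (αk k) s) atTop atTop := by
  intro s hs hQs
  have hJk k := hJ (αk k) (hαkpos k) s hs
  exact stmt_4_general (fun i => (hImono i).monotoneOn) (fun i _ => hIlt i)
    (fun i _ => hIcont i 0 self_mem_Ici) (fun i _ => hI0 i) hQ hα
    (fun i hi => .of_forall fun k => (hfix k i hi).ge) hinf
    (.of_forall fun k => (hJk k).1) (.of_forall fun k => hQs.trans_eq (hJk k).2.symm)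
end

section
/- (Well-definedness of the mapping φ₂.) Let J : A → [0, ∞) be a strictly increasing function with J(0) = 0, let S be a random variable taking values in A with P(S > 0) = 1, and let i ∈ {1, …, n} with 0 < E[X_i] < M_i. Then the function α ↦ E[I_i(J(S)/α)] from (0, ∞) to ℝ is continuous and strictly decreasing, tends to M_i as α → 0⁺ and to 0 as α → ∞; consequently, the equation E[I_i(J(S)/α_i)] = E[X_i] has a unique solution α_i > 0. -/
open Set Filter Topology MeasureTheory

/-!
For fixed `y > 0`, the quotient `y / a` decreases strictly and continuously from `∞` to `0` as `a`
runs through `(0, ∞)`. Since `Y > 0` almost everywhere, each property of `a ↦ E[f (Y / a)]` is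
inherited from `f` pointwise: `f` lies between its two limits, hence is bounded, so continuity and
both limits pass through the integral by dominated convergence; strict monotonicity passes because
a strict a.e. inequality survives integration.
-/

theorem mapsTo_Icc_of_monotoneOn_Ioi {α β : Type*} [LinearOrder α] [TopologicalSpace α]
    [OrderTopology α] [DenselyOrdered α] [NoMaxOrder α] [Preorder β] [TopologicalSpace β]
    [OrderClosedTopology β] {f : α → β} {x₀ : α} {u m : β} (hf : MonotoneOn f (Ioi x₀))
    (hu : Tendsto f (𝓝[>] x₀) (𝓝 u)) (hm : Tendsto f atTop (𝓝 m)) :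
    MapsTo f (Ioi x₀) (Icc u m) := by
  intro x hx
  have : Nonempty α := ⟨x₀⟩
  constructor
  · refine le_of_tendsto hu ?_
    filter_upwards [Ioo_mem_nhdsGT hx] with y hy using hf hy.1 hx hy.2.le
  · refine ge_of_tendsto hm ?_
    filter_upwards [eventually_ge_atTop x] with y hxy using hf hx (hx.trans_le hxy) hxy

theorem existsUnique_mem_eq_of_injOn_of_tendsto {X α : Type*} [TopologicalSpace X]
    [LinearOrder α] [TopologicalSpace α] [OrderClosedTopology α] {F : X → α} {s : Set X}
    (hs : IsPreconnected s) (hF : ContinuousOn F s) (hinj : InjOn F s) {l₁ l₂ : Filter X}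
    [l₁.NeBot] [l₂.NeBot] (hl₁ : l₁ ≤ 𝓟 s) (hl₂ : l₂ ≤ 𝓟 s) {v₁ v₂ c : α}
    (h₁ : Tendsto F l₁ (𝓝 v₁)) (h₂ : Tendsto F l₂ (𝓝 v₂)) (hc : c ∈ Ioo v₁ v₂) :
    ∃! x, x ∈ s ∧ F x = c := by
  obtain ⟨x, hx, rfl⟩ := hs.intermediate_value_Ioo hl₁ hl₂ hF h₁ h₂ hc
  exact ⟨x, ⟨hx, rfl⟩, fun y ⟨hy, hyx⟩ => hinj hy hx hyx⟩

section AlmostEverywhere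

variable {Ω : Type*} [MeasurableSpace Ω] {μ : Measure Ω}

theorem aestronglyMeasurable_comp_of_continuousOn {α β : Type*} [TopologicalSpace α]
    [MeasurableSpace α] [OpensMeasurableSpace α] [TopologicalSpace β]
    [TopologicalSpace.PseudoMetrizableSpace β] [SecondCountableTopologyEither α β]
    {f : α → β} {s : Set α} {Y : Ω → α} (hf : ContinuousOn f s) (hs : MeasurableSet s)
    (hY : AEMeasurable Y μ) (hYs : ∀ᵐ ω ∂μ, Y ω ∈ s) :
    AEStronglyMeasurable (fun ω => f (Y ω)) μ := by
  have hf' : AEStronglyMeasurable f ((μ.map Y).restrict s) := hf.aestronglyMeasurable hs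
  rw [Measure.restrict_eq_self_of_ae_mem ((ae_map_iff hY hs).2 hYs)] at hf'
  exact hf'.comp_aemeasurable hY

theorem integral_lt_integral_of_ae_lt [NeZero μ] {g h : Ω → ℝ} (hg : Integrable g μ)
    (hh : Integrable h μ) (hlt : ∀ᵐ ω ∂μ, g ω < h ω) : ∫ ω, g ω ∂μ < ∫ ω, h ω ∂μ := by
  have hle : g ≤ᵐ[μ] h := hlt.mono fun _ => le_of_lt
  refine (integral_mono_ae hg hh hle).lt_of_ne fun heq => ?_
  have hae : g =ᵐ[μ] h := (integral_eq_iff_of_ae_le hg hh hle).1 heq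
  obtain ⟨ω, hω, hω'⟩ := (hlt.and hae).exists
  exact hω.ne hω'

theorem strictAntiOn_integral_comp_div [NeZero μ] {f : ℝ → ℝ} {Y : Ω → ℝ}
    (hmono : StrictMonoOn f (Ioi 0)) (hint : ∀ a, 0 < a → Integrable (fun ω => f (Y ω / a)) μ)
    (hpos : ∀ᵐ ω ∂μ, 0 < Y ω) :
    StrictAntiOn (fun a => ∫ ω, f (Y ω / a) ∂μ) (Ioi 0) := by
  intro a ha b hb hab
  refine integral_lt_integral_of_ae_lt (hint b hb) (hint a ha) ?_
  filter_upwards [hpos] with ω hω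
  exact hmono (div_pos hω hb) (div_pos hω ha) (div_lt_div_of_pos_left hω ha hab)

end AlmostEverywhere

section IntegralCompDiv

variable {Ω E : Type*} [MeasurableSpace Ω] {μ : Measure Ω} [IsFiniteMeasure μ]
  [NormedAddCommGroup E] {f : ℝ → E} {C : ℝ} {Y : Ω → ℝ}

theorem integrable_comp_div (hf : ContinuousOn f (Ioi 0)) (hC : ∀ x, 0 < x → ‖f x‖ ≤ C)
    (hY : AEMeasurable Y μ) (hpos : ∀ᵐ ω ∂μ, 0 < Y ω) {a : ℝ} (ha : 0 < a) :
    Integrable (fun ω => f (Y ω / a)) μ :=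
  have hpos_div : ∀ᵐ ω ∂μ, 0 < Y ω / a := hpos.mono fun _ hω => div_pos hω ha
  .of_bound (aestronglyMeasurable_comp_of_continuousOn hf measurableSet_Ioi (hY.div_const a)
    hpos_div) C (hpos_div.mono fun _ hω => hC _ hω)

variable [NormedSpace ℝ E]

theorem tendsto_integral_comp_div (hf : ContinuousOn f (Ioi 0))
    (hC : ∀ x, 0 < x → ‖f x‖ ≤ C) (hY : AEMeasurable Y μ) (hpos : ∀ᵐ ω ∂μ, 0 < Y ω)
    {l : Filter ℝ} [l.IsCountablyGenerated] (hl : ∀ᶠ a in l, 0 < a) {g : ℝ → E}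
    (hg : ∀ y, 0 < y → Tendsto (fun a => f (y / a)) l (𝓝 (g y))) :
    Tendsto (fun a => ∫ ω, f (Y ω / a) ∂μ) l (𝓝 (∫ ω, g (Y ω) ∂μ)) := by
  refine tendsto_integral_filter_of_dominated_convergence (fun _ => C) ?_ ?_
    (integrable_const C) (hpos.mono fun ω hω => hg _ hω)
  · filter_upwards [hl] with a ha
    exact (integrable_comp_div hf hC hY hpos ha).aestronglyMeasurable
  · filter_upwards [hl] with a ha
    filter_upwards [hpos] with ω hω using hC _ (div_pos hω ha)

theorem continuousOn_integral_comp_div (hf : ContinuousOn f (Ioi 0))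
    (hC : ∀ x, 0 < x → ‖f x‖ ≤ C) (hY : AEMeasurable Y μ) (hpos : ∀ᵐ ω ∂μ, 0 < Y ω) :
    ContinuousOn (fun a => ∫ ω, f (Y ω / a) ∂μ) (Ioi 0) := by
  refine continuousOn_of_forall_continuousAt fun a ha => ?_
  refine tendsto_integral_comp_div hf hC hY hpos (lt_mem_nhds ha) (g := fun y => f (y / a))
    fun y hy => ?_
  have hfy : ContinuousAt f (y / a) := hf.continuousAt (Ioi_mem_nhds (div_pos hy ha))
  exact hfy.tendsto.comp (tendsto_const_nhds.div tendsto_id ha.ne')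

variable [CompleteSpace E] {v : E}

theorem tendsto_integral_comp_div_nhdsGT_zero (hf : ContinuousOn f (Ioi 0))
    (hC : ∀ x, 0 < x → ‖f x‖ ≤ C) (hv : Tendsto f atTop (𝓝 v)) (hY : AEMeasurable Y μ)
    (hpos : ∀ᵐ ω ∂μ, 0 < Y ω) :
    Tendsto (fun a => ∫ ω, f (Y ω / a) ∂μ) (𝓝[>] 0) (𝓝 (μ.real univ • v)) := by
  rw [← integral_const]
  refine tendsto_integral_comp_div hf hC hY hpos self_mem_nhdsWithin
    (g := fun _ => v) fun y hy => ?_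
  have hdiv : Tendsto (fun a => y / a) (𝓝[>] 0) atTop := by
    simpa only [div_eq_mul_inv] using tendsto_inv_nhdsGT_zero.const_mul_atTop hy
  exact hv.comp hdiv

theorem tendsto_integral_comp_div_atTop (hf : ContinuousOn f (Ioi 0))
    (hC : ∀ x, 0 < x → ‖f x‖ ≤ C) (hv : Tendsto f (𝓝[>] 0) (𝓝 v)) (hY : AEMeasurable Y μ)
    (hpos : ∀ᵐ ω ∂μ, 0 < Y ω) :
    Tendsto (fun a => ∫ ω, f (Y ω / a) ∂μ) atTop (𝓝 (μ.real univ • v)) := by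
  rw [← integral_const]
  refine tendsto_integral_comp_div hf hC hY hpos (eventually_gt_atTop 0)
    (g := fun _ => v) fun y hy => ?_
  have hdiv : Tendsto (fun a => y / a) atTop (𝓝[>] 0) :=
    tendsto_nhdsWithin_iff.2 ⟨tendsto_const_nhds.div_atTop tendsto_id,
      (eventually_gt_atTop 0).mono fun _ ha => div_pos hy ha⟩
  exact hv.comp hdiv

end IntegralCompDiv

theorem stmt_5_general {Ω : Type*} [MeasurableSpace Ω] {P : Measure Ω} [IsProbabilityMeasure P]
    {f : ℝ → ℝ} {u m c : ℝ} {Y : Ω → ℝ} (hf : ContinuousOn f (Ioi 0))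
    (hmono : StrictMonoOn f (Ioi 0)) (hu : Tendsto f (𝓝[>] 0) (𝓝 u))
    (hm : Tendsto f atTop (𝓝 m)) (hY : AEMeasurable Y P) (hpos : ∀ᵐ ω ∂P, 0 < Y ω)
    (hc : c ∈ Ioo u m) :
    ContinuousOn (fun a : ℝ => ∫ ω, f (Y ω / a) ∂P) (Ioi 0) ∧
    StrictAntiOn (fun a : ℝ => ∫ ω, f (Y ω / a) ∂P) (Ioi 0) ∧
    Tendsto (fun a : ℝ => ∫ ω, f (Y ω / a) ∂P) (𝓝[>] 0) (𝓝 m) ∧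
    Tendsto (fun a : ℝ => ∫ ω, f (Y ω / a) ∂P) atTop (𝓝 u) ∧
    ∃! a : ℝ, 0 < a ∧ ∫ ω, f (Y ω / a) ∂P = c := by
  have hbound : ∀ x, 0 < x → ‖f x‖ ≤ max |u| |m| := fun x hx =>
    have hux := mapsTo_Icc_of_monotoneOn_Ioi hmono.monotoneOn hu hm hx
    abs_le_max_abs_abs hux.1 hux.2
  have hcont := continuousOn_integral_comp_div hf hbound hY hpos
  have hanti := strictAntiOn_integral_comp_div hmono
    (fun _ => integrable_comp_div hf hbound hY hpos) hpos
  have hzero := tendsto_integral_comp_div_nhdsGT_zero hf hbound hm hY hpos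
  have htop := tendsto_integral_comp_div_atTop hf hbound hu hY hpos
  rw [probReal_univ, one_smul] at hzero htop
  have hsol : ∃! a : ℝ, 0 < a ∧ ∫ ω, f (Y ω / a) ∂P = c :=
    existsUnique_mem_eq_of_injOn_of_tendsto isPreconnected_Ioi hcont hanti.injOn
      (l₂ := 𝓝[>] 0) (le_principal_iff.2 (Ioi_mem_atTop 0)) inf_le_right htop hzero hc
  exact ⟨hcont, hanti, hzero, htop, hsol⟩

/-- well-definedness of φ₂: for a strictly increasing `J` with
`J(0)=0`, a random variable `S` valued in `A` with `P(S>0)=1`, and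
`0 < E[X_i] < M_i`, the map `α ↦ E[I_i(J(S)/α)]` is continuous and strictly
decreasing on `(0,∞)`, tends to `M_i` at `0⁺` and to `0` at `∞`; hence
`E[I_i(J(S)/α_i)] = E[X_i]` has a unique solution `α_i > 0`. -/
theorem stmt_5
    (n : ℕ) (hn : 1 ≤ n) (M : Fin n → ℝ) (hM : ∀ i, 0 < M i)
    (I : Fin n → ℝ → ℝ)
    (hIcont : ∀ i, ContinuousOn (I i) (Ici 0))
    (hImono : ∀ i, StrictMonoOn (I i) (Ici 0))
    (hI0 : ∀ i, I i 0 = 0)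
    (hIlt : ∀ i z, 0 ≤ z → I i z < M i)
    (hIlim : ∀ i, Tendsto (I i) atTop (𝓝 (M i)))
    (Ω : Type*) [MeasurableSpace Ω] (P : Measure Ω) [IsProbabilityMeasure P]
    (S : Ω → ℝ) (hSmeas : Measurable S)
    (hSA : ∀ᵐ ω ∂P, S ω ∈ Ico 0 (∑ i, M i))
    (hSpos : ∀ᵐ ω ∂P, 0 < S ω)
    (J : ℝ → ℝ) (hJmeas : Measurable J)
    (hJmono : StrictMonoOn J (Ico 0 (∑ i, M i)))
    (hJnonneg : ∀ s ∈ Ico 0 (∑ i, M i), 0 ≤ J s)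
    (hJ0 : J 0 = 0)
    (i : Fin n) (X : Ω → ℝ) (hXint : Integrable X P)
    (hEX : 0 < ∫ ω, X ω ∂P ∧ ∫ ω, X ω ∂P < M i) :
    ContinuousOn (fun a : ℝ => ∫ ω, I i (J (S ω) / a) ∂P) (Ioi 0) ∧
    StrictAntiOn (fun a : ℝ => ∫ ω, I i (J (S ω) / a) ∂P) (Ioi 0) ∧
    Tendsto (fun a : ℝ => ∫ ω, I i (J (S ω) / a) ∂P) (𝓝[>] 0) (𝓝 (M i)) ∧
    Tendsto (fun a : ℝ => ∫ ω, I i (J (S ω) / a) ∂P) atTop (𝓝 0) ∧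
    ∃! a : ℝ, 0 < a ∧ ∫ ω, I i (J (S ω) / a) ∂P = ∫ ω, X ω ∂P := by
  have hpos : ∀ᵐ ω ∂P, 0 < J (S ω) := by
    filter_upwards [hSA, hSpos] with ω hA hS
    simpa only [hJ0] using hJmono ⟨le_rfl, hS.trans hA.2⟩ hA hS
  have hzero : Tendsto (I i) (𝓝[>] 0) (𝓝 0) := by
    simpa only [ContinuousWithinAt, hI0] using (hIcont i 0 self_mem_Ici).mono Ioi_subset_Ici_self
  exact stmt_5_general ((hIcont i).mono Ioi_subset_Ici_self) ((hImono i).mono Ioi_subset_Ici_self)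
    hzero (hIlim i) (hJmeas.comp hSmeas).aemeasurable hpos hEX
end

section
/- (Strict monotonicity of the mapping φ₂, part of Lemma 3.8.) Let S be a random variable taking values in A, let J₁, J₂ : A → [0, ∞) be measurable functions with J₁(s) ≥ J₂(s) for all s ∈ A and P(J₁(S) > J₂(S)) > 0, and let i ∈ {1, …, n}. If α¹_i > 0 and α²_i > 0 satisfy E[I_i(J₁(S)/α¹_i)] = E[X_i] and E[I_i(J₂(S)/α²_i)] = E[X_i], then α¹_i > α²_i. -/
open Set Filter Topology MeasureTheory

/-! If `α₁ ≤ α₂`, then `Y₂ / α₂ ≤ Y₁ / α₁` almost surely, strictly where `Y₂ < Y₁`. A strictly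
increasing `f` turns this into a strict inequality between the expectations of `f (Y₂ / α₂)` and
`f (Y₁ / α₁)`, which are finite because `f` is bounded; the fairness equations forbid it. -/

section

variable {Ω : Type*} [MeasurableSpace Ω] {P : Measure Ω}

theorem integral_lt_integral_of_ae_le_of_frequently_ae_lt {f g : Ω → ℝ} (hf : Integrable f P)
    (hg : Integrable g P) (hle : f ≤ᵐ[P] g) (hlt : ∃ᵐ ω ∂P, f ω < g ω) :
    ∫ ω, f ω ∂P < ∫ ω, g ω ∂P := by
  refine (integral_mono_ae hf hg hle).lt_of_ne fun hint => hlt ?_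
  have heq : f =ᵐ[P] g := (integral_eq_iff_of_ae_le hf hg hle).1 hint
  exact heq.mono fun _ h => h.not_lt

theorem integral_comp_lt_integral_comp_of_strictMonoOn {E : Type*} [PartialOrder E] {s : Set E}
    {f : E → ℝ} {Y Z : Ω → E} (hf : StrictMonoOn f s) (hY : ∀ᵐ ω ∂P, Y ω ∈ s)
    (hZ : ∀ᵐ ω ∂P, Z ω ∈ s) (hfY : Integrable (fun ω => f (Y ω)) P)
    (hfZ : Integrable (fun ω => f (Z ω)) P) (hle : Y ≤ᵐ[P] Z) (hlt : ∃ᵐ ω ∂P, Y ω < Z ω) :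
    ∫ ω, f (Y ω) ∂P < ∫ ω, f (Z ω) ∂P := by
  refine integral_lt_integral_of_ae_le_of_frequently_ae_lt hfY hfZ ?_ ?_
  · filter_upwards [hY, hZ, hle] with ω hYω hZω h using hf.monotoneOn hYω hZω h
  · exact (hlt.and_eventually (hY.and hZ)).mono fun ω ⟨h, hYω, hZω⟩ => hf hYω hZω h

theorem integrable_comp_of_monotoneOn_of_bdd [IsFiniteMeasure P] {E : Type*} [LinearOrder E]
    [TopologicalSpace E] [OrderClosedTopology E] [MeasurableSpace E] [BorelSpace E]
    {s : Set E} {f : E → ℝ} {Y : Ω → E} (hf : MonotoneOn f s) (hbelow : BddBelow (f '' s))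
    (habove : BddAbove (f '' s)) (hY : AEMeasurable Y P) (hYs : ∀ᵐ ω ∂P, Y ω ∈ s) :
    Integrable (fun ω => f (Y ω)) P := by
  obtain ⟨g, hg, hfg⟩ := hf.exists_monotone_extension hbelow habove
  have hgY : (fun ω => g (Y ω)) =ᵐ[P] fun ω => f (Y ω) := hYs.mono fun _ h => (hfg h).symm
  have hmeas : AEMeasurable (fun ω => f (Y ω)) P :=
    (hg.measurable.comp_aemeasurable hY).congr hgY
  obtain ⟨a, ha⟩ := hbelow
  obtain ⟨b, hb⟩ := habove
  exact .of_mem_Icc a b hmeas <| hYs.mono fun _ h =>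
    ⟨ha (mem_image_of_mem f h), hb (mem_image_of_mem f h)⟩

theorem stmt_6_general [IsFiniteMeasure P] {f : ℝ → ℝ} {Y₁ Y₂ : Ω → ℝ} {α₁ α₂ : ℝ}
    (hf : StrictMonoOn f (Ici 0)) (hbdd : BddAbove (f '' Ici 0)) (hY₁ : AEMeasurable Y₁ P)
    (hY₂ : AEMeasurable Y₂ P) (hY₂nonneg : 0 ≤ᵐ[P] Y₂) (hle : Y₂ ≤ᵐ[P] Y₁)
    (hlt : ∃ᵐ ω ∂P, Y₂ ω < Y₁ ω) (hα₁ : 0 < α₁)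
    (hint : ∫ ω, f (Y₁ ω / α₁) ∂P ≤ ∫ ω, f (Y₂ ω / α₂) ∂P) :
    α₂ < α₁ := by
  by_contra! hα
  have hα₂ : 0 < α₂ := hα₁.trans_le hα
  have hY₁nonneg : 0 ≤ᵐ[P] Y₁ := hY₂nonneg.trans hle
  have hdiv₁ : ∀ᵐ ω ∂P, Y₁ ω / α₁ ∈ Ici 0 := hY₁nonneg.mono fun _ h => div_nonneg h hα₁.le
  have hdiv₂ : ∀ᵐ ω ∂P, Y₂ ω / α₂ ∈ Ici 0 := hY₂nonneg.mono fun _ h => div_nonneg h hα₂.le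
  have hdiv_le : ∀ᵐ ω ∂P, Y₂ ω / α₂ ≤ Y₁ ω / α₁ := by
    filter_upwards [hY₁nonneg, hle] with ω h₁ h using div_le_div₀ h₁ h hα₁ hα
  have hdiv_lt : ∃ᵐ ω ∂P, Y₂ ω / α₂ < Y₁ ω / α₁ :=
    (hlt.and_eventually hY₁nonneg).mono fun _ h => div_lt_div₀ h.1 hα h.2 hα₁
  have hbelow : BddBelow (f '' Ici 0) := hf.monotoneOn.map_bddBelow Subset.rfl
    ⟨0, fun _ => id, self_mem_Ici⟩
  exact hint.not_gt <| integral_comp_lt_integral_comp_of_strictMonoOn hf hdiv₂ hdiv₁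
    (integrable_comp_of_monotoneOn_of_bdd hf.monotoneOn hbelow hbdd (hY₂.div_const α₂) hdiv₂)
    (integrable_comp_of_monotoneOn_of_bdd hf.monotoneOn hbelow hbdd (hY₁.div_const α₁) hdiv₁)
    hdiv_le hdiv_lt

end

/-- strict monotonicity of φ₂, part of Lemma 3.8: if `J₁ ≥ J₂`
on `A` with `P(J₁(S) > J₂(S)) > 0`, and `α¹_i, α²_i > 0` both solve the
fairness equation for `J₁` resp. `J₂`, then `α¹_i > α²_i`. -/
theorem stmt_6
    (n : ℕ) (hn : 1 ≤ n) (M : Fin n → ℝ) (hM : ∀ i, 0 < M i)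
    (I : Fin n → ℝ → ℝ)
    (hIcont : ∀ i, ContinuousOn (I i) (Ici 0))
    (hImono : ∀ i, StrictMonoOn (I i) (Ici 0))
    (hI0 : ∀ i, I i 0 = 0)
    (hIlt : ∀ i z, 0 ≤ z → I i z < M i)
    (hIlim : ∀ i, Tendsto (I i) atTop (𝓝 (M i)))
    (Ω : Type*) [MeasurableSpace Ω] (P : Measure Ω) [IsProbabilityMeasure P]
    (S : Ω → ℝ) (hSmeas : Measurable S)
    (hSA : ∀ᵐ ω ∂P, S ω ∈ Ico 0 (∑ i, M i))
    (J₁ J₂ : ℝ → ℝ) (hJ₁meas : Measurable J₁) (hJ₂meas : Measurable J₂)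
    (hJ₁nonneg : ∀ s ∈ Ico 0 (∑ i, M i), 0 ≤ J₁ s)
    (hJ₂nonneg : ∀ s ∈ Ico 0 (∑ i, M i), 0 ≤ J₂ s)
    (hle : ∀ s ∈ Ico 0 (∑ i, M i), J₂ s ≤ J₁ s)
    (hstrict : 0 < P {ω | J₂ (S ω) < J₁ (S ω)})
    (i : Fin n) (X : Ω → ℝ) (hXint : Integrable X P)
    (α₁ α₂ : ℝ) (hα₁ : 0 < α₁) (hα₂ : 0 < α₂)
    (hfair₁ : ∫ ω, I i (J₁ (S ω) / α₁) ∂P = ∫ ω, X ω ∂P)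
    (hfair₂ : ∫ ω, I i (J₂ (S ω) / α₂) ∂P = ∫ ω, X ω ∂P) :
    α₂ < α₁ := by
  have hbdd : BddAbove (I i '' Ici 0) := ⟨M i, forall_mem_image.2 fun z hz => (hIlt i z hz).le⟩
  exact stmt_6_general (hImono i) hbdd (hJ₁meas.comp hSmeas).aemeasurable
    (hJ₂meas.comp hSmeas).aemeasurable (hSA.mono fun _ => hJ₂nonneg _) (hSA.mono fun _ => hle _)
    (frequently_ae_iff.2 hstrict.ne') hα₁ (hfair₁.trans hfair₂.symm).le
end

section
/- (Lemma 3.9.) Let S be a random variable taking values in A with P(S > 0) = 1, and let (J_k)_{k≥1} be a sequence of measurable functions from A to [0, ∞) such that J_k(s) → ∞ as k → ∞ for every s ∈ A with s > 0. For each i ∈ {1, …, n} with 0 < E[X_i] < M_i, let α^k_i > 0 satisfy E[I_i(J_k(S)/α^k_i)] = E[X_i]. Then α^k_i → ∞ as k → ∞ for every such i. -/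
open Set Filter Topology MeasureTheory

/-! Fix a scale `c`. By dominated convergence the expectation of `f (Y k / c)` tends to the mass of
the measure times the limit `L` of `f`, so it eventually exceeds the prescribed level `m`. Since
for `y ≥ 0` the value `f (y / b)` is nonincreasing in `b > 0`, a level of at most `m` at scale `a k`
then forces `c < a k`. -/

lemma mem_Icc_of_monotoneOn_Ici_of_tendsto {α β : Type*} [Preorder α] [IsDirectedOrder α]
    [Preorder β] [TopologicalSpace β] [ClosedIciTopology β] {f : α → β} {a x : α} {L : β}
    (hf : MonotoneOn f (Ici a)) (hlim : Tendsto f atTop (𝓝 L)) (hx : a ≤ x) :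
    f x ∈ Icc (f a) L := by
  have : Nonempty α := ⟨a⟩
  refine ⟨hf self_mem_Ici hx hx, ge_of_tendsto hlim ?_⟩
  filter_upwards [eventually_ge_atTop x] with y hxy using hf hx (hx.trans hxy) hxy

section Integral

variable {Ω : Type*} [MeasurableSpace Ω] {μ : Measure Ω}
  {α : Type*} [LinearOrder α] [TopologicalSpace α] [OrderClosedTopology α] [MeasurableSpace α]
  [BorelSpace α]

lemma aemeasurable_comp_of_monotoneOn {β : Type*} [LinearOrder β] [TopologicalSpace β]
    [OrderTopology β] [SecondCountableTopology β] [MeasurableSpace β] [BorelSpace β]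
    {f : α → β} {s : Set α} {Y : Ω → α} (hs : MeasurableSet s) (hf : MonotoneOn f s)
    (hY : AEMeasurable Y μ) (hYs : ∀ᵐ ω ∂μ, Y ω ∈ s) :
    AEMeasurable (fun ω => f (Y ω)) μ := by
  have hrestrict : (μ.map Y).restrict s = μ.map Y :=
    Measure.restrict_eq_self_of_ae_mem ((ae_map_iff hY hs).2 hYs)
  have hfmap : AEMeasurable f (μ.map Y) :=
    hrestrict ▸ aemeasurable_restrict_of_monotoneOn hs hf
  exact hfmap.comp_aemeasurable hY

variable [IsFiniteMeasure μ] {L : ℝ}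

lemma integrable_comp_of_monotoneOn_Ici {f : α → ℝ} {a : α} {Y : Ω → α}
    (hf : MonotoneOn f (Ici a)) (hlim : Tendsto f atTop (𝓝 L))
    (hY : AEMeasurable Y μ) (hYa : ∀ᵐ ω ∂μ, a ≤ Y ω) :
    Integrable (fun ω => f (Y ω)) μ := by
  refine .of_mem_Icc (f a) L (aemeasurable_comp_of_monotoneOn measurableSet_Ici hf hY hYa) ?_
  filter_upwards [hYa] with ω hω using mem_Icc_of_monotoneOn_Ici_of_tendsto hf hlim hω

lemma tendsto_integral_comp_of_monotoneOn_Ici {ι : Type*} {l : Filter ι}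
    [l.IsCountablyGenerated] {f : α → ℝ} {a : α} {Y : ι → Ω → α}
    (hf : MonotoneOn f (Ici a)) (hlim : Tendsto f atTop (𝓝 L))
    (hY : ∀ k, AEMeasurable (Y k) μ) (hYa : ∀ k, ∀ᵐ ω ∂μ, a ≤ Y k ω)
    (hYlim : ∀ᵐ ω ∂μ, Tendsto (fun k => Y k ω) l atTop) :
    Tendsto (fun k => ∫ ω, f (Y k ω) ∂μ) l (𝓝 (μ.real univ * L)) := by
  rw [← smul_eq_mul, ← integral_const]
  refine tendsto_integral_filter_of_norm_le_const
    (.of_forall fun k =>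
      (integrable_comp_of_monotoneOn_Ici hf hlim (hY k) (hYa k)).aestronglyMeasurable)
    ⟨max |f a| |L|, .of_forall fun k => ?_⟩ (hYlim.mono fun ω hω => hlim.comp hω)
  filter_upwards [hYa k] with ω hω
  have hfY := mem_Icc_of_monotoneOn_Ici_of_tendsto hf hlim hω
  exact abs_le_max_abs_abs hfY.1 hfY.2

lemma integral_comp_div_le_of_monotoneOn_Ici {f : ℝ → ℝ} {Y : Ω → ℝ} {b c : ℝ}
    (hf : MonotoneOn f (Ici 0)) (hlim : Tendsto f atTop (𝓝 L)) (hY : AEMeasurable Y μ)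
    (hY0 : ∀ᵐ ω ∂μ, 0 ≤ Y ω) (hb : 0 < b) (hbc : b ≤ c) :
    ∫ ω, f (Y ω / c) ∂μ ≤ ∫ ω, f (Y ω / b) ∂μ := by
  have hdiv : ∀ a, 0 < a → ∀ᵐ ω ∂μ, 0 ≤ Y ω / a := fun a ha =>
    hY0.mono fun ω hω => div_nonneg hω ha.le
  have hint : ∀ a, 0 < a → Integrable (fun ω => f (Y ω / a)) μ := fun a ha =>
    integrable_comp_of_monotoneOn_Ici hf hlim (hY.div_const a) (hdiv a ha)
  have hc : 0 < c := hb.trans_le hbc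
  refine integral_mono_ae (hint c hc) (hint b hb) ?_
  filter_upwards [hY0, hdiv b hb, hdiv c hc] with ω hω hωb hωc
  exact hf hωc hωb (div_le_div_of_nonneg_left hω hb hbc)

theorem stmt_8_general {ι : Type*} {l : Filter ι} [l.IsCountablyGenerated] {f : ℝ → ℝ}
    {m : ℝ} {Y : ι → Ω → ℝ} {a : ι → ℝ}
    (hf : MonotoneOn f (Ici 0)) (hlim : Tendsto f atTop (𝓝 L)) (hm : m < μ.real univ * L)
    (hY : ∀ k, AEMeasurable (Y k) μ) (hY0 : ∀ k, ∀ᵐ ω ∂μ, 0 ≤ Y k ω)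
    (hYlim : ∀ᵐ ω ∂μ, Tendsto (fun k => Y k ω) l atTop)
    (ha : ∀ k, 0 < a k) (hle : ∀ k, ∫ ω, f (Y k ω / a k) ∂μ ≤ m) :
    Tendsto a l atTop := by
  refine (atTop_basis_Ioi' 0).tendsto_right_iff.2 fun c hc => ?_
  have hfixed : Tendsto (fun k => ∫ ω, f (Y k ω / c) ∂μ) l (𝓝 (μ.real univ * L)) :=
    tendsto_integral_comp_of_monotoneOn_Ici hf hlim (fun k => (hY k).div_const c)
      (fun k => (hY0 k).mono fun ω hω => div_nonneg hω hc.le)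
      (hYlim.mono fun ω hω => hω.atTop_div_const hc)
  filter_upwards [hfixed.eventually_const_lt hm] with k hk
  by_contra hac
  exact hk.not_ge <| (integral_comp_div_le_of_monotoneOn_Ici hf hlim (hY k) (hY0 k) (ha k)
    (not_lt.1 hac)).trans (hle k)

end Integral

/-- Lemma 3.9: if `J_k(s) → ∞` for every `s ∈ A` with `s > 0`
and `P(S > 0) = 1`, then the solutions `α^k_i` of the fairness equations tend
to infinity, for every `i` with `0 < E[X_i] < M_i`. -/
theorem stmt_8
    (n : ℕ) (hn : 1 ≤ n) (M : Fin n → ℝ) (hM : ∀ i, 0 < M i)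
    (I : Fin n → ℝ → ℝ)
    (hIcont : ∀ i, ContinuousOn (I i) (Ici 0))
    (hImono : ∀ i, StrictMonoOn (I i) (Ici 0))
    (hI0 : ∀ i, I i 0 = 0)
    (hIlt : ∀ i z, 0 ≤ z → I i z < M i)
    (hIlim : ∀ i, Tendsto (I i) atTop (𝓝 (M i)))
    (Ω : Type*) [MeasurableSpace Ω] (P : Measure Ω) [IsProbabilityMeasure P]
    (S : Ω → ℝ) (hSmeas : Measurable S)
    (hSA : ∀ᵐ ω ∂P, S ω ∈ Ico 0 (∑ i, M i))
    (hSpos : ∀ᵐ ω ∂P, 0 < S ω)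
    (Jk : ℕ → ℝ → ℝ) (hJkmeas : ∀ k, Measurable (Jk k))
    (hJknonneg : ∀ k, ∀ s ∈ Ico 0 (∑ i, M i), 0 ≤ Jk k s)
    (hJkinf : ∀ s ∈ Ico 0 (∑ i, M i), 0 < s →
      Tendsto (fun k => Jk k s) atTop atTop)
    (i : Fin n) (X : Ω → ℝ) (hXint : Integrable X P)
    (hEX : 0 < ∫ ω, X ω ∂P ∧ ∫ ω, X ω ∂P < M i)
    (αk : ℕ → ℝ) (hαkpos : ∀ k, 0 < αk k)
    (hfairk : ∀ k, ∫ ω, I i (Jk k (S ω) / αk k) ∂P = ∫ ω, X ω ∂P) :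
    Tendsto αk atTop atTop := by
  exact stmt_8_general (hImono i).monotoneOn (hIlim i) (by simpa using hEX.2)
    (fun k => ((hJkmeas k).comp hSmeas).aemeasurable)
    (fun k => hSA.mono fun ω hω => hJknonneg k _ hω)
    ((hSA.and hSpos).mono fun ω hω => hJkinf _ hω.1 hω.2) hαkpos fun k => (hfairk k).le
end

section
/- (Proposition 3.10: the only eigenvalue with a positive eigenvector is 1.) Let X_1, …, X_n be nonnegative integrable random variables with P(Σ X_i > 0) > 0, set S = Σ_{i=1}^n X_i, and assume P(S ∈ A) = 1. Suppose α ∈ ℝ_{>0}^n, λ > 0, and a measurable function J : A → [0, ∞) satisfy: (i) Σ_{i=1}^n I_i(J(s)/α_i) = s for every s ∈ A, and (ii) E[I_i(J(S)/(λ α_i))] = E[X_i] for every i ∈ {1, …, n}. Then λ = 1. -/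
open Set Filter Topology MeasureTheory

/-!
Since `y / (l * αᵢ) = (y / l) / αᵢ`, scaling the weights by `l` amounts to replacing `Y = J(S)` by
`Y / l` in the aggregate function `G(y) = ∑ᵢ Iᵢ(y / αᵢ)`. Feasibility makes `G(Y) = S`, and summing
the fairness conditions gives `E[G(Y / l)] = E[S] = E[G(Y)]`. As `G` is increasing, `G(Y / l)` and
`G(Y)` are ordered almost surely, so having equal expectations they coincide; strictness then gives
`Y / l = Y`, and `Y` is nonzero wherever `S` is.
-/

section

variable {Ω : Type*} [MeasurableSpace Ω] {μ : Measure Ω}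

theorem integrable_comp_of_monotoneOn_Ici_s9 {β : Type*} [LinearOrder β] [TopologicalSpace β]
    [OrderClosedTopology β] [MeasurableSpace β] [BorelSpace β] [IsFiniteMeasure μ]
    {f : β → ℝ} {a : β} {b : ℝ} {Y : Ω → β} (hf : MonotoneOn f (Ici a))
    (hfb : ∀ z, a ≤ z → f z ≤ b) (hY : AEMeasurable Y μ) (haY : ∀ᵐ ω ∂μ, a ≤ Y ω) :
    Integrable (fun ω => f (Y ω)) μ := by
  have hlaw : (μ.map Y).restrict (Ici a) = μ.map Y :=
    Measure.restrict_eq_self_of_ae_mem ((ae_map_iff hY measurableSet_Ici).2 haY)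
  have hf_aemeas : AEMeasurable f (μ.map Y) :=
    hlaw ▸ aemeasurable_restrict_of_monotoneOn measurableSet_Ici hf
  exact Integrable.of_mem_Icc (f a) b (hf_aemeas.comp_aemeasurable hY)
    (haY.mono fun _ hω => ⟨hf self_mem_Ici hω hω, hfb _ hω⟩)

theorem eq_one_of_integral_comp_div_eq {G : ℝ → ℝ} {Y : Ω → ℝ} {c : ℝ}
    (hG : StrictMonoOn G (Ici 0)) (hc : 0 < c) (hY : ∀ᵐ ω ∂μ, 0 ≤ Y ω)
    (hYne : ∃ᵐ ω ∂μ, Y ω ≠ 0) (hint : Integrable (fun ω => G (Y ω)) μ)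
    (hintc : Integrable (fun ω => G (Y ω / c)) μ)
    (heq : ∫ ω, G (Y ω / c) ∂μ = ∫ ω, G (Y ω) ∂μ) :
    c = 1 := by
  have hcongr : ∀ᵐ ω ∂μ, G (Y ω / c) = G (Y ω) := by
    rcases le_total c 1 with hc1 | hc1
    · have hle : ∀ᵐ ω ∂μ, G (Y ω) ≤ G (Y ω / c) := hY.mono fun ω hω =>
        hG.monotoneOn hω (div_nonneg hω hc.le) (le_div_self hω hc hc1)
      exact EventuallyEq.symm <| (integral_eq_iff_of_ae_le hint hintc hle).1 heq.symm
    · have hle : ∀ᵐ ω ∂μ, G (Y ω / c) ≤ G (Y ω) := hY.mono fun ω hω =>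
        hG.monotoneOn (div_nonneg hω hc.le) hω (div_le_self hω hc1)
      exact (integral_eq_iff_of_ae_le hintc hint hle).1 heq
  obtain ⟨ω, hne, hω, hGω⟩ := (hYne.and_eventually (hY.and hcongr)).exists
  have hfix : Y ω / c = Y ω := hG.injOn (div_nonneg hω hc.le) hω hGω
  exact (mul_eq_left₀ hne).1 ((div_eq_iff hc.ne').1 hfix).symm

variable {ι : Type*} [Fintype ι]

theorem strictMonoOn_sum_comp_div {I : ι → ℝ → ℝ} {α : ι → ℝ}
    (hI : ∀ i, MonotoneOn (I i) (Ici 0)) (hIstrict : ∃ i, StrictMonoOn (I i) (Ici 0))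
    (hα : ∀ i, 0 < α i) :
    StrictMonoOn (fun y => ∑ i, I i (y / α i)) (Ici 0) := by
  intro x hx y hy hxy
  have hdiv {z : ℝ} (hz : 0 ≤ z) (i : ι) : 0 ≤ z / α i := div_nonneg hz (hα i).le
  obtain ⟨j, hj⟩ := hIstrict
  exact Finset.sum_lt_sum
    (fun i _ => hI i (hdiv hx i) (hdiv hy i) (div_le_div_of_nonneg_right hxy.le (hα i).le))
    ⟨j, Finset.mem_univ j, hj (hdiv hx j) (hdiv hy j) (div_lt_div_of_pos_right hxy (hα j))⟩

theorem stmt_9_general {I : ι → ℝ → ℝ} {α : ι → ℝ} {l : ℝ} {X : ι → Ω → ℝ} {Y : Ω → ℝ}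
    (hI : ∀ i, MonotoneOn (I i) (Ici 0)) (hIstrict : ∃ i, StrictMonoOn (I i) (Ici 0))
    (hI0 : ∀ i, I i 0 = 0) (hα : ∀ i, 0 < α i) (hl : 0 < l)
    (hXint : ∀ i, Integrable (X i) μ) (hXne : ∃ᵐ ω ∂μ, ∑ i, X i ω ≠ 0)
    (hY : ∀ᵐ ω ∂μ, 0 ≤ Y ω) (hfeas : ∀ᵐ ω ∂μ, ∑ i, I i (Y ω / α i) = ∑ i, X i ω)
    (hint : ∀ i, Integrable (fun ω => I i (Y ω / (l * α i))) μ)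
    (hfair : ∀ i, ∫ ω, I i (Y ω / (l * α i)) ∂μ = ∫ ω, X i ω ∂μ) :
    l = 1 := by
  simp only [← div_div] at hint hfair
  have hYne : ∃ᵐ ω ∂μ, Y ω ≠ 0 :=
    (hXne.and_eventually hfeas).mono fun ω ⟨hne, hsum⟩ hY0 =>
      hne <| by simp only [← hsum, hY0, zero_div, hI0, Finset.sum_const_zero]
  have hsumint : Integrable (fun ω => ∑ i, X i ω) μ := integrable_finsetSum _ fun i _ => hXint i
  refine eq_one_of_integral_comp_div_eq (strictMonoOn_sum_comp_div hI hIstrict hα) hl hY hYne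
    (hsumint.congr (EventuallyEq.symm hfeas)) (integrable_finsetSum _ fun i _ => hint i) ?_
  calc ∫ ω, ∑ i, I i (Y ω / l / α i) ∂μ
      = ∑ i, ∫ ω, I i (Y ω / l / α i) ∂μ := integral_finsetSum _ fun i _ => hint i
    _ = ∑ i, ∫ ω, X i ω ∂μ := Finset.sum_congr rfl fun i _ => hfair i
    _ = ∫ ω, ∑ i, X i ω ∂μ := (integral_finsetSum _ fun i _ => hXint i).symm
    _ = ∫ ω, ∑ i, I i (Y ω / α i) ∂μ := (integral_congr_ae hfeas).symm

end

/-- Proposition 3.10: if `(α, J)` satisfies the feasibility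
condition and `λ·α` satisfies the fairness condition, then `λ = 1`. -/
theorem stmt_9
    (n : ℕ) (hn : 1 ≤ n) (M : Fin n → ℝ) (hM : ∀ i, 0 < M i)
    (I : Fin n → ℝ → ℝ)
    (hIcont : ∀ i, ContinuousOn (I i) (Ici 0))
    (hImono : ∀ i, StrictMonoOn (I i) (Ici 0))
    (hI0 : ∀ i, I i 0 = 0)
    (hIlt : ∀ i z, 0 ≤ z → I i z < M i)
    (hIlim : ∀ i, Tendsto (I i) atTop (𝓝 (M i)))
    (Ω : Type*) [MeasurableSpace Ω] (P : Measure Ω) [IsProbabilityMeasure P]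
    (X : Fin n → Ω → ℝ) (hXmeas : ∀ i, Measurable (X i))
    (hXnonneg : ∀ i, ∀ᵐ ω ∂P, 0 ≤ X i ω)
    (hXint : ∀ i, Integrable (X i) P)
    (hposS : 0 < P {ω | 0 < ∑ i, X i ω})
    (hSA : ∀ᵐ ω ∂P, (∑ i, X i ω) ∈ Ico 0 (∑ i, M i))
    (α : Fin n → ℝ) (hα : ∀ i, 0 < α i) (l : ℝ) (hl : 0 < l)
    (J : ℝ → ℝ) (hJmeas : Measurable J)
    (hJnonneg : ∀ s ∈ Ico 0 (∑ i, M i), 0 ≤ J s)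
    (hfeas : ∀ s ∈ Ico 0 (∑ i, M i), ∑ i, I i (J s / α i) = s)
    (hfair : ∀ i, ∫ ω, I i (J (∑ j, X j ω) / (l * α i)) ∂P = ∫ ω, X i ω ∂P) :
    l = 1 := by
  have hY : ∀ᵐ ω ∂P, 0 ≤ J (∑ i, X i ω) := hSA.mono fun _ hω => hJnonneg _ hω
  have hint (i : Fin n) : Integrable (fun ω => I i (J (∑ j, X j ω) / (l * α i))) P :=
    integrable_comp_of_monotoneOn_Ici_s9 (hImono i).monotoneOn (fun z hz => (hIlt i z hz).le)
      ((hJmeas.comp (Finset.measurable_fun_sum _ fun j _ => hXmeas j)).div_const _).aemeasurable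
      (hY.mono fun _ hω => div_nonneg hω (mul_pos hl (hα i)).le)
  exact stmt_9_general (fun i => (hImono i).monotoneOn) ⟨⟨0, hn⟩, hImono _⟩ hI0 hα hl hXint
    ((frequently_ae_iff.2 hposS.ne').mono fun _ hω => hω.ne') hY
    (hSA.mono fun _ hω => hfeas _ hω) hint hfair
end

section
/- (Oshime's theorem, Theorem 3.2.) Let φ : ℝ_{≥0}^n → ℝ_{≥0}^n be continuous, monotone (x ≤ y componentwise implies φ(x) ≤ φ(y) componentwise), positively homogeneous of degree 1 (φ(λx) = λφ(x) for all λ > 0), and non-sectional. Then there exist λ* > 0 and s* ∈ ℝ_{>0}^n with φ(s*) = λ* s*; moreover, if λ > 0 and s ∈ ℝ_{>0}^n satisfy φ(s) = λ s, then s is a positive scalar multiple of s*. -/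
open Set Filter Topology

/-- A mapping `φ` of the nonnegative cone of `ℝ^n` is *non-sectional* if for
every decomposition of the index set into complementary nonempty subsets `Q`
and `R = Qᶜ` there exists `q ∈ Q` such that simultaneously:
(1) `φ(w)_q > φ(y)_q` whenever `w_i > y_i` for all `i ∈ R` and
    `w_i = y_i > 0` for all `i ∈ Q`; and
(2) `φ(w^k)_q → ∞` for every sequence `(w^k)` in the nonnegative cone with
    `w^k_i → ∞` for each `i ∈ R` while `w^k_i` is fixed and positive for each
    `i ∈ Q`. -/
def NonSectional {n : ℕ} (φ : (Fin n → ℝ) → Fin n → ℝ) : Prop :=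
  ∀ Q : Finset (Fin n), Q.Nonempty → Qᶜ.Nonempty →
    ∃ q ∈ Q,
      (∀ w y : Fin n → ℝ, (∀ i, 0 ≤ w i) → (∀ i, 0 ≤ y i) →
        (∀ i ∉ Q, y i < w i) → (∀ i ∈ Q, w i = y i ∧ 0 < y i) →
        φ y q < φ w q) ∧
      (∀ w : ℕ → Fin n → ℝ, (∀ k i, 0 ≤ w k i) →
        (∀ i ∉ Q, Tendsto (fun k => w k i) atTop atTop) →
        (∀ i ∈ Q, ∃ c : ℝ, 0 < c ∧ ∀ k, w k i = c) →
        Tendsto (fun k => φ (w k) q) atTop atTop)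

/-!
For positive vectors put `M(y/x) = max_i y_i / x_i`, and call `M(φ x / x)` the Collatz–Wielandt
number of `x`; it depends continuously on `x` because `M(x/y)⁻¹ φ x ≤ φ y ≤ M(y/x) φ x`. Clause (2)
of non-sectionality bounds the vectors with least coordinate `1` whose Collatz–Wielandt number is
at most a given constant: a bound on some of the coordinates forces a bound on one more. By
compactness the number attains its minimum `r` over the positive vectors, and `r > 0` by clause (1).

If `φ x ≤ r x`, then `x' = (x + r⁻¹ φ x) / 2` satisfies `φ x' ≤ φ x ≤ r x'`, strictly at each
coordinate where the inequality for `x` was strict, and clause (1) makes one more coordinate strict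
unless `x` is an eigenvector. Since `r` is minimal, not all coordinates can become strict, so an `x`
with as few tight coordinates as possible is an eigenvector. Uniqueness follows by applying
clause (1) to `x ≤ M(x/s) s`, in which some coordinate is tight.
-/

section MaxRatio

variable {ι : Type*} {x y : ι → ℝ} {c : ℝ}

/-- The quantity `M(y/x)` of Perron–Frobenius theory: for positive `x`, the least `c` with
`y ≤ c • x`. -/
noncomputable def maxRatio (y x : ι → ℝ) : ℝ := ⨆ i, y i / x i

lemma maxRatio_self [Nonempty ι] (hx : ∀ i, 0 < x i) : maxRatio x x = 1 := by
  simp [maxRatio, fun i => div_self (hx i).ne']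

lemma maxRatio_smul_smul (hc : c ≠ 0) (y x : ι → ℝ) : maxRatio (c • y) (c • x) = maxRatio y x := by
  simp only [maxRatio, Pi.smul_apply, smul_eq_mul, mul_div_mul_left _ _ hc]

variable [Finite ι] [Nonempty ι]

lemma maxRatio_le_iff (hx : ∀ i, 0 < x i) : maxRatio y x ≤ c ↔ y ≤ c • x := by
  rw [maxRatio, ciSup_le_iff (finite_range _).bddAbove]
  exact forall_congr' fun i => div_le_iff₀ (hx i)

lemma le_maxRatio_smul (hx : ∀ i, 0 < x i) : y ≤ maxRatio y x • x :=
  (maxRatio_le_iff hx).1 le_rfl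

lemma exists_eq_maxRatio_mul (y : ι → ℝ) (hx : ∀ i, 0 < x i) : ∃ i, y i = maxRatio y x * x i := by
  obtain ⟨i, hi⟩ := exists_eq_ciSup_of_finite (f := fun i => y i / x i)
  exact ⟨i, (div_eq_iff (hx i).ne').1 hi⟩

lemma maxRatio_pos (hy : ∀ i, 0 < y i) (hx : ∀ i, 0 < x i) : 0 < maxRatio y x := by
  obtain ⟨i, hi⟩ := exists_eq_maxRatio_mul y hx
  exact pos_of_mul_pos_left (hi ▸ hy i) (hx i).le

lemma exists_one_le_smul (hx : ∀ i, 0 < x i) : ∃ c : ℝ, 0 < c ∧ 1 ≤ c • x ∧ ∃ i, (c • x) i = 1 :=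
  ⟨maxRatio 1 x, maxRatio_pos (fun _ => one_pos) hx, le_maxRatio_smul hx,
    (exists_eq_maxRatio_mul 1 hx).imp fun _ => Eq.symm⟩

lemma continuousOn_maxRatio {X : Type*} [TopologicalSpace X] {s : Set X} {f g : X → ι → ℝ}
    (hf : ContinuousOn f s) (hg : ContinuousOn g s) (hg0 : ∀ a ∈ s, ∀ i, 0 < g a i) :
    ContinuousOn (fun a => maxRatio (f a) (g a)) s := by
  have := Fintype.ofFinite ι
  simp only [maxRatio, ← Finset.sup'_univ_eq_ciSup]
  exact ContinuousOn.finset_sup'_apply _ fun i _ =>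
    (continuousOn_pi.1 hf i).div (continuousOn_pi.1 hg i) fun a ha => (hg0 a ha i).ne'

end MaxRatio

section Definitions

variable {ι : Type*}

/-- Monotone, positively homogeneous maps. Both conditions are imposed on the open cone of
positive vectors only. -/
structure IsMonotoneHomogeneous (φ : (ι → ℝ) → ι → ℝ) : Prop where
  monotoneOn : MonotoneOn φ {x | ∀ i, 0 < x i}
  map_smul : ∀ ⦃c : ℝ⦄, 0 < c → ∀ ⦃x : ι → ℝ⦄, (∀ i, 0 < x i) → φ (c • x) = c • φ x

/-- Clause (1) of non-sectionality, for positive vectors. The set `Q` of the decomposition is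
recovered as `{i | x i = y i}`; the index `i` may depend on `x` and `y`, not only on `Q`. -/
def IsSectionallyStrict (φ : (ι → ℝ) → ι → ℝ) : Prop :=
  ∀ ⦃x y : ι → ℝ⦄, (∀ i, 0 < x i) → x < y → (∃ i, x i = y i) → ∃ i, x i = y i ∧ φ x i < φ y i

/-- Clause (2) of non-sectionality: if the coordinates of `x` outside `Q` tend to infinity while
those in `Q` stay at least `1`, then `φ x` is unbounded on `Q`. By homogeneity the bound `1` stands
for any positive constant. -/
def IsSectionallyCoercive (φ : (ι → ℝ) → ι → ℝ) : Prop :=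
  ∀ Q : Set ι, Q.Nonempty → Qᶜ.Nonempty → ∀ C : ℝ, ∃ t : ℝ, ∀ x : ι → ℝ, 1 ≤ x →
    (∀ i ∉ Q, t ≤ x i) → ∃ q ∈ Q, C < φ x q

/-- Positive super-eigenvectors of `φ` for the value `r`. -/
structure IsSuperEigenvector (φ : (ι → ℝ) → ι → ℝ) (r : ℝ) (x : ι → ℝ) : Prop where
  pos : ∀ i, 0 < x i
  map_le : φ x ≤ r • x

/-- The coordinates at which the inequality `φ x ≤ r • x` of a super-eigenvector is an equality. -/
def tightSet (φ : (ι → ℝ) → ι → ℝ) (r : ℝ) (x : ι → ℝ) : Set ι := {i | φ x i = r * x i}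

/-- The Collatz–Wielandt number of a positive vector `x`: the least `r` with `φ x ≤ r • x`. -/
noncomputable def collatzWielandt (φ : (ι → ℝ) → ι → ℝ) (x : ι → ℝ) : ℝ := maxRatio (φ x) x

end Definitions

variable {ι : Type*} {φ : (ι → ℝ) → ι → ℝ} {x y s : ι → ℝ} {l r L : ℝ}

namespace IsMonotoneHomogeneous

lemma map_nonneg (hφ : IsMonotoneHomogeneous φ) (hx : ∀ i, 0 < x i) (i : ι) : 0 ≤ φ x i := by
  have hx' : ∀ i, 0 < ((1 / 2 : ℝ) • x) i := fun i => mul_pos one_half_pos (hx i)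
  have hle : (1 / 2 : ℝ) • φ x ≤ φ x := by
    rw [← hφ.map_smul one_half_pos hx]
    exact hφ.monotoneOn hx' hx fun i => mul_le_of_le_one_left (hx i).le one_half_lt_one.le
  have : 1 / 2 * φ x i ≤ φ x i := hle i
  linarith

lemma collatzWielandt_smul (hφ : IsMonotoneHomogeneous φ) {c : ℝ} (hc : 0 < c)
    (hx : ∀ i, 0 < x i) : collatzWielandt φ (c • x) = collatzWielandt φ x := by
  rw [collatzWielandt, hφ.map_smul hc hx, maxRatio_smul_smul hc.ne', collatzWielandt]

variable [Finite ι] [Nonempty ι]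

lemma map_le_maxRatio_smul (hφ : IsMonotoneHomogeneous φ) (hy : ∀ i, 0 < y i)
    (hx : ∀ i, 0 < x i) : φ y ≤ maxRatio y x • φ x := by
  have hM := maxRatio_pos hy hx
  rw [← hφ.map_smul hM hx]
  exact hφ.monotoneOn hy (fun i => mul_pos hM (hx i)) (le_maxRatio_smul hx)

lemma continuousOn (hφ : IsMonotoneHomogeneous φ) : ContinuousOn φ {x | ∀ i, 0 < x i} := by
  refine continuousOn_pi.2 fun i x hx => ?_
  have hlower : Tendsto (fun y => (maxRatio x y)⁻¹ * φ x i) (𝓝[{y | ∀ i, 0 < y i}] x)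
      (𝓝 (φ x i)) := by
    have h := continuousOn_maxRatio (continuousOn_const (c := x)) continuousOn_id
      (fun y (hy : y ∈ {y : ι → ℝ | ∀ i, 0 < y i}) => hy) x hx
    simpa [ContinuousWithinAt, maxRatio_self hx] using
      (h.inv₀ (by simp [maxRatio_self hx])).mul_const (φ x i)
  have hupper : Tendsto (fun y => maxRatio y x * φ x i) (𝓝[{y | ∀ i, 0 < y i}] x)
      (𝓝 (φ x i)) := by
    have h := continuousOn_maxRatio continuousOn_id (continuousOn_const (c := x))
      (fun y (_ : y ∈ {y : ι → ℝ | ∀ i, 0 < y i}) => hx) x hx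
    simpa [ContinuousWithinAt, maxRatio_self hx] using h.mul_const (φ x i)
  refine tendsto_of_tendsto_of_tendsto_of_le_of_le' hlower hupper ?_ ?_
  · filter_upwards [self_mem_nhdsWithin] with y hy
    exact (inv_mul_le_iff₀ (maxRatio_pos hx hy)).2 (hφ.map_le_maxRatio_smul hx hy i)
  · filter_upwards [self_mem_nhdsWithin] with y hy
    exact hφ.map_le_maxRatio_smul hy hx i

lemma continuousOn_collatzWielandt (hφ : IsMonotoneHomogeneous φ) :
    ContinuousOn (collatzWielandt φ) {x | ∀ i, 0 < x i} :=
  continuousOn_maxRatio hφ.continuousOn continuousOn_id fun _ hx => hx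

lemma le_of_subEigenvector_of_superEigenvector (hφ : IsMonotoneHomogeneous φ)
    (hx : ∀ i, 0 < x i) (hφx : l • x ≤ φ x) (hs : IsSuperEigenvector φ r s) : l ≤ r := by
  obtain ⟨j, hj⟩ := exists_eq_maxRatio_mul x hs.pos
  refine le_of_mul_le_mul_right ?_ (hx j)
  calc l * x j ≤ φ x j := hφx j
    _ ≤ maxRatio x s * φ s j := hφ.map_le_maxRatio_smul hx hs.pos j
    _ ≤ maxRatio x s * (r * s j) :=
      mul_le_mul_of_nonneg_left (hs.map_le j) (maxRatio_pos hx hs.pos).le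
    _ = r * x j := by rw [hj, mul_left_comm]

end IsMonotoneHomogeneous

lemma IsSectionallyStrict.eq_smul_of_subEigenvector [Finite ι] [Nonempty ι]
    (hstrict : IsSectionallyStrict φ) (hφ : IsMonotoneHomogeneous φ)
    (hx : ∀ i, 0 < x i) (hφx : r • x ≤ φ x) (hs : IsSuperEigenvector φ r s) :
    x = maxRatio x s • s := by
  have hM := maxRatio_pos hx hs.pos
  by_contra hne
  obtain ⟨q, hq, hlt⟩ := hstrict hx ((le_maxRatio_smul hs.pos).lt_of_ne hne)
    (exists_eq_maxRatio_mul x hs.pos)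
  refine hlt.not_ge ?_
  calc φ (maxRatio x s • s) q = maxRatio x s * φ s q := congrFun (hφ.map_smul hM hs.pos) q
    _ ≤ maxRatio x s * (r * s q) := mul_le_mul_of_nonneg_left (hs.map_le q) hM.le
    _ = r * x q := by rw [hq, Pi.smul_apply, smul_eq_mul, mul_left_comm]
    _ ≤ φ x q := hφx q

namespace IsSuperEigenvector

lemma eigenvalue_pos [Nontrivial ι] (hs : IsSuperEigenvector φ r s)
    (hφ : IsMonotoneHomogeneous φ) (hstrict : IsSectionallyStrict φ) : 0 < r := by
  classical
  obtain ⟨a, b, hab⟩ := exists_pair_ne ι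
  have hhalf : s b / 2 < s b := half_lt_self (hs.pos b)
  have hpos : ∀ i, 0 < Function.update s b (s b / 2) i := by
    rw [Function.forall_update_iff s fun _ t => 0 < t]
    exact ⟨half_pos (hs.pos b), fun i _ => hs.pos i⟩
  obtain ⟨q, -, hlt⟩ := hstrict hpos (update_lt_self_iff.2 hhalf)
    ⟨a, Function.update_of_ne hab _ _⟩
  have : 0 < r * s q := (hφ.map_nonneg hpos q).trans_lt (hlt.trans_le (hs.map_le q))
  exact pos_of_mul_pos_left this (hs.pos q).le

lemma exists_tightSet_ssubset (hs : IsSuperEigenvector φ r s) (hφ : IsMonotoneHomogeneous φ)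
    (hstrict : IsSectionallyStrict φ) (hr : 0 < r) (htight : (tightSet φ r s).Nonempty)
    (hne : φ s ≠ r • s) : ∃ y, IsSuperEigenvector φ r y ∧ tightSet φ r y ⊂ tightSet φ r s := by
  let y : ι → ℝ := fun i => (r * s i + φ s i) / (2 * r)
  have hry : ∀ i, r * y i = (r * s i + φ s i) / 2 := fun i => by simp only [y]; field_simp
  have hy : ∀ i, 0 < y i := fun i =>
    div_pos (add_pos_of_pos_of_nonneg (mul_pos hr (hs.pos i)) (hφ.map_nonneg hs.pos i))
      (by positivity)
  have hle : ∀ i, φ s i ≤ r * s i := hs.map_le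
  have hys : y ≤ s := fun i => le_of_mul_le_mul_left (by linarith [hry i, hle i]) hr
  have hφy : φ y ≤ φ s := hφ.monotoneOn hy hs.pos hys
  have hy_eq_iff : ∀ i, y i = s i ↔ i ∈ tightSet φ r s := fun i => by
    rw [← mul_right_inj' hr.ne', hry, tightSet, mem_ofPred_eq]
    constructor <;> intro h <;> linarith
  have hys_lt : y < s := hys.lt_of_ne fun h =>
    hne (funext fun i => (hy_eq_iff i).1 (congrFun h i))
  obtain ⟨q, hq, hlt⟩ := hstrict hy hys_lt (htight.imp fun i => (hy_eq_iff i).2)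
  refine ⟨y, ⟨hy, fun i => ?_⟩, (ssubset_iff_of_subset fun i hi => ?_).2
    ⟨q, (hy_eq_iff q).1 hq, fun hqy => ?_⟩⟩
  · change φ y i ≤ r * y i
    linarith [hφy i, hle i, hry i]
  · have : φ y i = r * y i := hi
    exact le_antisymm (hle i) (by linarith [hφy i, hry i])
  · have : φ y q = r * y q := hqy
    rw [hq] at this
    linarith [hle q]

end IsSuperEigenvector

section Existence

variable [Finite ι]

lemma IsSectionallyCoercive.bddAbove_superEigenvectors_of_le_on (hco : IsSectionallyCoercive φ)
    (hL : 0 ≤ L) {Q : Set ι} (hQ : Q.Nonempty) (B : ℝ) :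
    BddAbove {x : ι → ℝ | 1 ≤ x ∧ φ x ≤ L • x ∧ ∀ i ∈ Q, x i ≤ B} := by
  induction Q using WellFoundedGT.induction generalizing B with
  | ind Q ih =>
    rcases Qᶜ.eq_empty_or_nonempty with hQc | hQc
    · exact ⟨fun _ => B, fun x hx i => hx.2.2 i (compl_empty_iff.1 hQc ▸ mem_univ i)⟩
    obtain ⟨t, ht⟩ := hco Q hQ hQc (L * B)
    refine BddAbove.mono (fun x hx => ?_) ((Qᶜ.toFinite.bddAbove_biUnion).2 fun i hi =>
      ih (insert i Q) (ssubset_insert hi) (insert_nonempty i Q) (max B t))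
    obtain ⟨hx1, hφx, hxB⟩ := hx
    have hsmall : ∃ i ∉ Q, x i < t := by
      by_contra! hlarge
      obtain ⟨q, hq, hlt⟩ := ht x hx1 hlarge
      exact hlt.not_ge ((hφx q).trans (mul_le_mul_of_nonneg_left (hxB q hq) hL))
    obtain ⟨i, hi, hit⟩ := hsmall
    refine mem_biUnion hi ⟨hx1, hφx, forall_mem_insert.2 ⟨le_max_of_le_right hit.le, ?_⟩⟩
    exact fun j hj => le_max_of_le_left (hxB j hj)

lemma IsSectionallyCoercive.bddAbove_superEigenvectors (hco : IsSectionallyCoercive φ)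
    (hL : 0 ≤ L) : BddAbove {x : ι → ℝ | 1 ≤ x ∧ φ x ≤ L • x ∧ ∃ i, x i = 1} := by
  refine BddAbove.mono ?_ ((finite_univ (α := ι)).bddAbove_biUnion.2 fun i _ =>
    hco.bddAbove_superEigenvectors_of_le_on hL (singleton_nonempty i) 1)
  rintro x ⟨hx1, hφx, i, hi⟩
  exact mem_biUnion (mem_univ i) ⟨hx1, hφx, by simp [hi]⟩

lemma IsMonotoneHomogeneous.exists_isMinOn_collatzWielandt [Nonempty ι]
    (hφ : IsMonotoneHomogeneous φ) (hco : IsSectionallyCoercive φ) :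
    ∃ x : ι → ℝ, (∀ i, 0 < x i) ∧ IsMinOn (collatzWielandt φ) {y | ∀ i, 0 < y i} x := by
  have pos_of_one_le : ∀ {y : ι → ℝ}, 1 ≤ y → ∀ i, 0 < y i := fun hy i => one_pos.trans_le (hy i)
  set L := collatzWielandt φ 1
  have hφ1 : φ 1 ≤ L • 1 := le_maxRatio_smul (pos_of_one_le le_rfl)
  have hL : 0 ≤ L := by
    simpa using (hφ.map_nonneg (pos_of_one_le le_rfl) (Classical.arbitrary ι)).trans (hφ1 _)
  obtain ⟨B, hB⟩ := hco.bddAbove_superEigenvectors hL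
  have h1B : (1 : ι → ℝ) ∈ Icc 1 B := ⟨le_rfl, hB ⟨le_rfl, hφ1, Classical.arbitrary ι, rfl⟩⟩
  obtain ⟨x, hx, hmin⟩ := isCompact_Icc.exists_isMinOn ⟨1, h1B⟩
    (hφ.continuousOn_collatzWielandt.mono fun y hy => pos_of_one_le hy.1)
  refine ⟨x, pos_of_one_le hx.1, fun y hy => ?_⟩
  change collatzWielandt φ x ≤ collatzWielandt φ y
  rcases le_total L (collatzWielandt φ y) with hLy | hyL
  · exact (hmin h1B).trans hLy
  obtain ⟨c, hc, h1c, hc1⟩ := exists_one_le_smul hy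
  rw [← hφ.collatzWielandt_smul hc hy] at hyL ⊢
  exact hmin ⟨h1c, hB ⟨h1c, (maxRatio_le_iff (pos_of_one_le h1c)).1 hyL, hc1⟩⟩

lemma IsMonotoneHomogeneous.exists_eigenvector_of_isMinOn [Nontrivial ι]
    (hφ : IsMonotoneHomogeneous φ) (hstrict : IsSectionallyStrict φ) (hx : ∀ i, 0 < x i)
    (hmin : IsMinOn (collatzWielandt φ) {y | ∀ i, 0 < y i} x) :
    ∃ s : ι → ℝ, (∀ i, 0 < s i) ∧ φ s = collatzWielandt φ x • s := by
  set r := collatzWielandt φ x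
  obtain ⟨s, hs, hs_min⟩ := exists_minimalFor_of_wellFoundedLT (IsSuperEigenvector φ r)
    (tightSet φ r) ⟨x, hx, le_maxRatio_smul hx⟩
  have hsr : collatzWielandt φ s = r :=
    le_antisymm ((maxRatio_le_iff hs.pos).2 hs.map_le) (hmin hs.pos)
  have htight : (tightSet φ r s).Nonempty := hsr ▸ exists_eq_maxRatio_mul (φ s) hs.pos
  refine ⟨s, hs.pos, ?_⟩
  by_contra hne
  obtain ⟨y, hy, hlt⟩ :=
    hs.exists_tightSet_ssubset hφ hstrict (hs.eigenvalue_pos hφ hstrict) htight hne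
  exact hlt.not_subset (hs_min hy hlt.subset)

end Existence

theorem stmt_11_general [Finite ι] [Nontrivial ι] (hφ : IsMonotoneHomogeneous φ)
    (hstrict : IsSectionallyStrict φ) (hco : IsSectionallyCoercive φ) :
    ∃ (r : ℝ) (s : ι → ℝ), 0 < r ∧ (∀ i, 0 < s i) ∧ φ s = r • s ∧
      ∀ (l : ℝ) (x : ι → ℝ), (∀ i, 0 < x i) → φ x = l • x →
        l = r ∧ ∃ c : ℝ, 0 < c ∧ x = c • s := by
  obtain ⟨x, hx, hmin⟩ := hφ.exists_isMinOn_collatzWielandt hco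
  obtain ⟨s, hs, hφs⟩ := hφ.exists_eigenvector_of_isMinOn hstrict hx hmin
  have hsuper : IsSuperEigenvector φ _ s := ⟨hs, hφs.le⟩
  refine ⟨_, s, hsuper.eigenvalue_pos hφ hstrict, hs, hφs, fun l z hz hφz => ?_⟩
  obtain rfl : l = collatzWielandt φ x := le_antisymm
    (hφ.le_of_subEigenvector_of_superEigenvector hz hφz.ge hsuper)
    (hφ.le_of_subEigenvector_of_superEigenvector hs hφs.ge ⟨hz, hφz.le⟩)
  exact ⟨rfl, maxRatio z s, maxRatio_pos hz hs,
    hstrict.eq_smul_of_subEigenvector hφ hz hφz.ge hsuper⟩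

namespace NonSectional

variable {n : ℕ} {φ : (Fin n → ℝ) → Fin n → ℝ}

lemma isSectionallyStrict (hns : NonSectional φ) : IsSectionallyStrict φ := by
  intro x y hx hxy ⟨j, hj⟩
  obtain ⟨hle, k, hk⟩ := Pi.lt_def.1 hxy
  obtain ⟨q, hq, hstrict, -⟩ := hns {i | x i = y i} ⟨j, by simpa using hj⟩
    ⟨k, by simpa using hk.ne⟩
  simp only [Finset.mem_filter_univ] at hq hstrict
  exact ⟨q, hq, hstrict y x (fun i => (hx i).le.trans (hle i)) (fun i => (hx i).le)
    (fun i hi => (hle i).lt_of_ne hi) fun i hi => ⟨hi.symm, hx i⟩⟩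

lemma isSectionallyCoercive (hns : NonSectional φ) (hmono : MonotoneOn φ {x | ∀ i, 0 < x i}) :
    IsSectionallyCoercive φ := by
  classical
  intro Q hQ hQc C
  obtain ⟨q, hq, -, htendsto⟩ := hns Q.toFinset (by simpa using hQ)
    (by simpa [← toFinset_compl] using hQc)
  simp only [mem_toFinset] at hq htendsto
  let w (k : ℕ) (i : Fin n) : ℝ := if i ∈ Q then 1 else k + 1
  have hw : ∀ k i, 0 < w k i := fun k i => by simp only [w]; split_ifs <;> positivity
  have hlim : Tendsto (fun k => φ (w k) q) atTop atTop := htendsto w (fun k i => (hw k i).le)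
    (fun i hi => by
      simpa [w, hi] using tendsto_atTop_add_const_right _ (1 : ℝ) tendsto_natCast_atTop_atTop)
    (fun i hi => ⟨1, one_pos, fun k => if_pos hi⟩)
  obtain ⟨k, hk⟩ := (hlim.eventually_gt_atTop C).exists
  refine ⟨k + 1, fun x hx1 hx => ⟨q, hq, hk.trans_le ?_⟩⟩
  refine hmono (hw k) (fun i => one_pos.trans_le (hx1 i)) (fun i => ?_) q
  by_cases hi : i ∈ Q
  · simpa [w, hi] using hx1 i
  · simpa [w, hi] using hx i hi

end NonSectional

/-- Oshime's theorem: a continuous, monotone, positively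
homogeneous and non-sectional self-map of the nonnegative cone has a positive
eigenvector, unique up to positive scalar multiples, with positive
eigenvalue. -/
theorem stmt_11
    (n : ℕ) (hn : 2 ≤ n)
    (φ : (Fin n → ℝ) → Fin n → ℝ)
    (hmaps : ∀ x : Fin n → ℝ, (∀ i, 0 ≤ x i) → ∀ i, 0 ≤ φ x i)
    (hcont : ContinuousOn φ {x : Fin n → ℝ | ∀ i, 0 ≤ x i})
    (hmono : ∀ x y : Fin n → ℝ, (∀ i, 0 ≤ x i) → (∀ i, x i ≤ y i) →
      ∀ i, φ x i ≤ φ y i)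
    (hhom : ∀ l : ℝ, 0 < l → ∀ x : Fin n → ℝ, (∀ i, 0 ≤ x i) →
      φ (fun i => l * x i) = fun i => l * φ x i)
    (hns : NonSectional φ) :
    ∃ (lstar : ℝ) (sstar : Fin n → ℝ), 0 < lstar ∧ (∀ i, 0 < sstar i) ∧
      φ sstar = (fun i => lstar * sstar i) ∧
      ∀ (l : ℝ) (s : Fin n → ℝ), 0 < l → (∀ i, 0 < s i) →
        φ s = (fun i => l * s i) →
        ∃ c : ℝ, 0 < c ∧ s = fun i => c * sstar i := by
  have : Nontrivial (Fin n) := Fin.nontrivial_iff_two_le.2 hn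
  have hφ : IsMonotoneHomogeneous φ :=
    ⟨fun x hx y _ hxy => hmono x y (fun i => (hx i).le) hxy,
      fun c hc x hx => hhom c hc x fun i => (hx i).le⟩
  obtain ⟨r, s, hr, hs, hφs, huniq⟩ :=
    stmt_11_general hφ hns.isSectionallyStrict (hns.isSectionallyCoercive hφ.monotoneOn)
  exact ⟨r, s, hr, hs, hφs, fun l z _ hz hφz => (huniq l z hz hφz).2⟩
end

section
/- (Lemma 4.4: homogeneous strongly monotone maps are contractive in the Hilbert metric.) Let φ : ℝ_{>0}^n → ℝ_{>0}^n be positively homogeneous of degree 1 (φ(λx) = λφ(x) for all λ > 0 and x ∈ ℝ_{>0}^n) and strongly monotone (if x ≤ y componentwise and x ≠ y, then φ(x)_i < φ(y)_i for every i). Then for all w, y ∈ ℝ_{>0}^n with d(w, y) > 0, one has d(φ(w), φ(y)) < d(w, y), where d is the Hilbert metric. -/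
open Set Filter Topology

/-- The Hilbert (projective) metric on the positive cone of `ℝ^n`:
`d(w, y) = log( max_i (w_i / y_i) / min_i (w_i / y_i) )`. -/
noncomputable def hilbertDist {n : ℕ} [NeZero n] (w y : Fin n → ℝ) : ℝ :=
  Real.log ((⨆ i, w i / y i) / (⨅ i, w i / y i))

/-!
Positivity of the distance means `m < M` for the least and largest ratios `w i / y i`. Then
`m • y < w < M • y`, so strong monotonicity and homogeneity confine every ratio `φ w k / φ y k` to
the open interval `(m, M)`. With finitely many coordinates the extreme ratios stay inside it, which
shrinks the distance.
-/

section Ratio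

variable {ι : Type*} {w y : ι → ℝ}

lemma iInf_div_eq_iSup_div_of_eq_smul [Nonempty ι] {c : ℝ} (hy : ∀ i, 0 < y i)
    (h : w = c • y) : ⨅ i, w i / y i = ⨆ i, w i / y i := by
  have ratio_eq (i : ι) : w i / y i = c := by
    rw [h, Pi.smul_apply, smul_eq_mul, mul_div_cancel_right₀ c (hy i).ne']
  simp only [ratio_eq, ciInf_const, ciSup_const]

variable [Finite ι]

lemma le_iSup_div_smul (hy : ∀ i, 0 < y i) : w ≤ (⨆ i, w i / y i) • y := fun i =>
  (div_le_iff₀ (hy i)).1 (Finite.le_ciSup (fun j => w j / y j) i)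

lemma iInf_div_smul_le (hy : ∀ i, 0 < y i) : (⨅ i, w i / y i) • y ≤ w := fun i =>
  (le_div_iff₀ (hy i)).1 (Finite.ciInf_le (fun j => w j / y j) i)

variable [Nonempty ι]

lemma iInf_div_pos (hw : ∀ i, 0 < w i) (hy : ∀ i, 0 < y i) : 0 < ⨅ i, w i / y i := by
  obtain ⟨i, hi⟩ := exists_eq_ciInf_of_finite (f := fun i => w i / y i)
  exact hi ▸ div_pos (hw i) (hy i)

lemma lt_iSup_div_smul (hy : ∀ i, 0 < y i) (h : ⨅ i, w i / y i < ⨆ i, w i / y i) :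
    w < (⨆ i, w i / y i) • y :=
  (le_iSup_div_smul hy).lt_of_ne fun heq => h.ne (iInf_div_eq_iSup_div_of_eq_smul hy heq)

lemma iInf_div_smul_lt (hy : ∀ i, 0 < y i) (h : ⨅ i, w i / y i < ⨆ i, w i / y i) :
    (⨅ i, w i / y i) • y < w :=
  (iInf_div_smul_le hy).lt_of_ne' fun heq => h.ne (iInf_div_eq_iSup_div_of_eq_smul hy heq)

end Ratio

section HilbertDist

variable {n : ℕ} [NeZero n] {w y : Fin n → ℝ}

lemma iInf_div_lt_iSup_div_of_hilbertDist_pos (hw : ∀ i, 0 < w i) (hy : ∀ i, 0 < y i)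
    (h : 0 < hilbertDist w y) : ⨅ i, w i / y i < ⨆ i, w i / y i := by
  have iInf_pos := iInf_div_pos hw hy
  have iInf_le_iSup : ⨅ i, w i / y i ≤ ⨆ i, w i / y i :=
    ciInf_le_ciSup (finite_range _).bddBelow (finite_range _).bddAbove
  have ratio_nonneg := div_nonneg (iInf_pos.le.trans iInf_le_iSup) iInf_pos.le
  exact (one_lt_div iInf_pos).1 ((Real.log_pos_iff ratio_nonneg).1 h)

lemma hilbertDist_lt_log_div {m M : ℝ} (hm : 0 < m) (hlower : ∀ i, m < w i / y i)
    (hupper : ∀ i, w i / y i < M) : hilbertDist w y < Real.log (M / m) := by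
  obtain ⟨i, hi⟩ := exists_eq_ciSup_of_finite (f := fun i => w i / y i)
  obtain ⟨j, hj⟩ := exists_eq_ciInf_of_finite (f := fun i => w i / y i)
  have max_pos : 0 < w i / y i := hm.trans (hlower i)
  have min_pos : 0 < w j / y j := hm.trans (hlower j)
  rw [hilbertDist, ← hi, ← hj]
  exact Real.log_lt_log (div_pos max_pos min_pos)
    (div_lt_div₀ (hupper i) (hlower j).le (max_pos.trans (hupper i)).le hm)

end HilbertDist

/-- Homogeneity of degree one together with strong monotonicity, for maps between open positive
orthants. Maps are total functions; both conditions concern only arguments with positive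
coordinates. Positivity of the values is `IsHomogeneousStronglyMonotone.apply_pos`. -/
structure IsHomogeneousStronglyMonotone {ι κ 𝕜 : Type*} [Field 𝕜] [LinearOrder 𝕜]
    (φ : (ι → 𝕜) → κ → 𝕜) : Prop where
  map_smul : ∀ c : 𝕜, 0 < c → ∀ x, (∀ i, 0 < x i) → φ (c • x) = c • φ x
  apply_lt_apply : ∀ x y, (∀ i, 0 < x i) → (∀ i, 0 < y i) → x < y → ∀ k, φ x k < φ y k

namespace IsHomogeneousStronglyMonotone

variable {ι κ 𝕜 : Type*} [Nonempty ι] [Field 𝕜] [LinearOrder 𝕜] [IsStrictOrderedRing 𝕜]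
  {φ : (ι → 𝕜) → κ → 𝕜} {w x y : ι → 𝕜} {c : 𝕜}

lemma apply_pos (hφ : IsHomogeneousStronglyMonotone φ) (hx : ∀ i, 0 < x i) (k : κ) :
    0 < φ x k := by
  have two_smul_pos (i : ι) : 0 < ((2 : 𝕜) • x) i := mul_pos two_pos (hx i)
  have lt_two_smul : x < (2 : 𝕜) • x :=
    lt_of_strongLT fun i => lt_mul_of_one_lt_left (hx i) one_lt_two
  have apply_lt : φ x k < 2 * φ x k :=
    (hφ.apply_lt_apply x _ hx two_smul_pos lt_two_smul k).trans_eq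
      (congrFun (hφ.map_smul 2 two_pos x hx) k)
  linarith

lemma div_lt_of_lt_smul (hφ : IsHomogeneousStronglyMonotone φ) (hw : ∀ i, 0 < w i)
    (hy : ∀ i, 0 < y i) (hc : 0 < c) (h : w < c • y) (k : κ) : φ w k / φ y k < c := by
  have apply_lt := hφ.apply_lt_apply w (c • y) hw (fun i => mul_pos hc (hy i)) h k
  rw [hφ.map_smul c hc y hy] at apply_lt
  exact (div_lt_iff₀ (hφ.apply_pos hy k)).2 apply_lt

lemma lt_div_of_smul_lt (hφ : IsHomogeneousStronglyMonotone φ) (hw : ∀ i, 0 < w i)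
    (hy : ∀ i, 0 < y i) (hc : 0 < c) (h : c • y < w) (k : κ) : c < φ w k / φ y k := by
  have lt_apply := hφ.apply_lt_apply (c • y) w (fun i => mul_pos hc (hy i)) hw h k
  rw [hφ.map_smul c hc y hy] at lt_apply
  exact (lt_div_iff₀ (hφ.apply_pos hy k)).2 lt_apply

end IsHomogeneousStronglyMonotone

theorem stmt_12_general {n m : ℕ} [NeZero n] [NeZero m] {φ : (Fin n → ℝ) → Fin m → ℝ}
    (hφ : IsHomogeneousStronglyMonotone φ) {w y : Fin n → ℝ} (hw : ∀ i, 0 < w i)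
    (hy : ∀ i, 0 < y i) (hd : 0 < hilbertDist w y) :
    hilbertDist (φ w) (φ y) < hilbertDist w y := by
  have iInf_pos := iInf_div_pos hw hy
  have iInf_lt_iSup := iInf_div_lt_iSup_div_of_hilbertDist_pos hw hy hd
  exact hilbertDist_lt_log_div iInf_pos
    (hφ.lt_div_of_smul_lt hw hy iInf_pos (iInf_div_smul_lt hy iInf_lt_iSup))
    (hφ.div_lt_of_lt_smul hw hy (iInf_pos.trans iInf_lt_iSup) (lt_iSup_div_smul hy iInf_lt_iSup))

/-- Lemma 4.4: a positively homogeneous, strongly monotone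
self-map of the positive cone is contractive with respect to the Hilbert
metric. -/
theorem stmt_12
    (n : ℕ) [NeZero n]
    (φ : (Fin n → ℝ) → Fin n → ℝ)
    (hmaps : ∀ x : Fin n → ℝ, (∀ i, 0 < x i) → ∀ i, 0 < φ x i)
    (hhom : ∀ l : ℝ, 0 < l → ∀ x : Fin n → ℝ, (∀ i, 0 < x i) →
      φ (fun i => l * x i) = fun i => l * φ x i)
    (hsmono : ∀ x y : Fin n → ℝ, (∀ i, 0 < x i) → (∀ i, 0 < y i) →
      (∀ i, x i ≤ y i) → x ≠ y → ∀ i, φ x i < φ y i) :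
    ∀ w y : Fin n → ℝ, (∀ i, 0 < w i) → (∀ i, 0 < y i) →
      0 < hilbertDist w y →
      hilbertDist (φ w) (φ y) < hilbertDist w y := by
  have hφ : IsHomogeneousStronglyMonotone φ :=
    ⟨hhom, fun x y hx hy hxy => hsmono x y hx hy hxy.le hxy.ne⟩
  exact fun w y hw hy hd => stmt_12_general hφ hw hy hd
end

section
/- (Nadler's theorem, Theorem 4.3.) Let (𝒳, d) be a locally compact and connected metric space, and let f : 𝒳 → 𝒳 be a contractive mapping, i.e. d(f(x), f(y)) < d(x, y) whenever x ≠ y, which possesses a fixed point x* ∈ 𝒳. Then for every x ∈ 𝒳 the sequence of iterates (f^{(k)}(x))_{k≥1} converges to x*. -/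
open Filter Topology

/-!
The distances from an orbit to the fixed point `p` decrease, so they take the same value at a
cluster point `y` of the orbit and at `f y`, which is again a cluster point; contractivity then
forces `y = p`. Hence every orbit starting in a small ball inside a compact neighbourhood of `p`
converges to `p`. The set of points whose orbits converge to `p` is therefore a neighbourhood of
`p`, and this makes it open since `f` is continuous, and closed since the iterates of `f` are
equicontinuous.
-/

section ClusterPoints

theorem tendsto_atTop_of_antitone_of_mapClusterPt {ι α : Type*} [Preorder ι]
    [TopologicalSpace α] [LinearOrder α] [OrderTopology α] {u : ι → α} {a : α}
    (hu : Antitone u) (ha : MapClusterPt a atTop u) : Tendsto u atTop (𝓝 a) := by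
  have a_le (i : ι) : a ≤ u i := by
    by_contra! h
    obtain ⟨j, hlt, hij⟩ :=
      ((ha.frequently (lt_mem_nhds h)).and_eventually (eventually_ge_atTop i)).exists
    exact hlt.not_ge (hu hij)
  refine tendsto_order.2 ⟨fun b hb => .of_forall fun i => hb.trans_le (a_le i), fun b hb => ?_⟩
  obtain ⟨i, hi⟩ := (ha.frequently (gt_mem_nhds hb)).exists
  filter_upwards [eventually_ge_atTop i] with j hij using (hu hij).trans_lt hi

theorem mapClusterPt_iterate_apply {X : Type*} [TopologicalSpace X] {f : X → X} {x y : X}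
    (hf : ContinuousAt f y) (hy : MapClusterPt y atTop (f^[·] x)) :
    MapClusterPt (f y) atTop (f^[·] x) := by
  refine .of_comp (tendsto_add_atTop_nat 1) ?_
  simpa only [Function.comp_def, Function.iterate_succ_apply'] using hy.continuousAt_comp hf

end ClusterPoints

section Basin

/-- The basin of attraction of `p` under `f`: the points whose orbits converge to `p`. The point
`p` is not required to be fixed by `f`. -/
def attractionBasin {X : Type*} [TopologicalSpace X] (f : X → X) (p : X) : Set X :=
  {x | Tendsto (f^[·] x) atTop (𝓝 p)}

theorem iterate_mem_attractionBasin_iff {X : Type*} [TopologicalSpace X] {f : X → X} {p x : X}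
    (k : ℕ) : f^[k] x ∈ attractionBasin f p ↔ x ∈ attractionBasin f p := by
  simpa only [attractionBasin, Set.mem_ofPred_eq, Function.iterate_add_apply] using
    tendsto_add_atTop_iff_nat (f := (f^[·] x)) (l := 𝓝 p) k

theorem isOpen_attractionBasin {X : Type*} [TopologicalSpace X] {f : X → X} {p : X}
    (hf : Continuous f) (hp : attractionBasin f p ∈ 𝓝 p) : IsOpen (attractionBasin f p) := by
  refine isOpen_iff_mem_nhds.2 fun x hx => ?_
  obtain ⟨k, hk⟩ := (hx.eventually (eventually_mem_nhds_iff.2 hp)).exists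
  filter_upwards [(hf.iterate k).continuousAt hk] with y hy
  exact (iterate_mem_attractionBasin_iff k).1 hy

theorem isClosed_attractionBasin {X : Type*} [UniformSpace X] {f : X → X} {p : X}
    (hf : Equicontinuous (f^[·])) (hp : attractionBasin f p ∈ 𝓝 p) :
    IsClosed (attractionBasin f p) := by
  refine isClosed_iff_frequently.2 fun x hx => ?_
  obtain ⟨V, hV, hball⟩ := UniformSpace.mem_nhds_iff.1 hp
  obtain ⟨W, hW, hWsymm, hWV⟩ := comp_symm_mem_uniformity_sets hV
  obtain ⟨y, hy, hxy⟩ := (hx.and_eventually (hf x W hW)).exists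
  obtain ⟨k, hk⟩ := (hy.eventually (UniformSpace.ball_mem_nhds p hW)).exists
  have hxp : (p, f^[k] x) ∈ V := hWV ⟨f^[k] y, hk, hWsymm.symm _ _ (hxy k)⟩
  exact (iterate_mem_attractionBasin_iff k).1 (hball hxp)

end Basin

section Nonexpansive

variable {X : Type*} [PseudoMetricSpace X] {f : X → X}

theorem equicontinuous_iterate_of_lipschitzWith_one (hf : LipschitzWith 1 f) :
    Equicontinuous (f^[·]) :=
  (LipschitzWith.uniformEquicontinuous _ 1 fun k => by
    simpa only [one_pow] using hf.iterate k).equicontinuous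

theorem antitone_dist_iterate_of_isFixedPt (hf : LipschitzWith 1 f) {p : X}
    (hp : Function.IsFixedPt f p) (x : X) : Antitone fun k => dist (f^[k] x) p := by
  refine antitone_nat_of_succ_le fun k => ?_
  simpa only [Function.iterate_succ_apply', hp.eq, NNReal.coe_one, one_mul] using
    hf.dist_le_mul (f^[k] x) p

end Nonexpansive

/-- Contractive maps in Edelstein's sense: distances between distinct points strictly decrease,
without the uniform factor required by `ContractingWith`. -/
def Contractive {X : Type*} [Dist X] (f : X → X) : Prop :=
  ∀ x y : X, x ≠ y → dist (f x) (f y) < dist x y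

namespace Contractive

theorem lipschitzWith_one {X : Type*} [PseudoMetricSpace X] {f : X → X} (hf : Contractive f) :
    LipschitzWith 1 f := by
  refine .of_dist_le_mul fun x y => ?_
  rcases eq_or_ne x y with rfl | hxy
  · simp
  · simpa using (hf x y hxy).le

variable {X : Type*} [MetricSpace X] {f : X → X} {p : X}

theorem tendsto_iterate_of_mapClusterPt (hf : Contractive f) (hp : Function.IsFixedPt f p)
    {x y : X} (hy : MapClusterPt y atTop (f^[·] x)) : Tendsto (f^[·] x) atTop (𝓝 p) := by
  have dist_tendsto {z : X} (hz : MapClusterPt z atTop (f^[·] x)) :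
      Tendsto (fun k => dist (f^[k] x) p) atTop (𝓝 (dist z p)) :=
    tendsto_atTop_of_antitone_of_mapClusterPt
      (antitone_dist_iterate_of_isFixedPt hf.lipschitzWith_one hp x)
      (hz.continuousAt_comp (continuous_id.dist continuous_const).continuousAt)
  have hfy : MapClusterPt (f y) atTop (f^[·] x) :=
    mapClusterPt_iterate_apply hf.lipschitzWith_one.continuous.continuousAt hy
  have dist_eq : dist (f y) (f p) = dist y p := by
    rw [hp.eq]
    exact tendsto_nhds_unique (dist_tendsto hfy) (dist_tendsto hy)
  obtain rfl : y = p := by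
    by_contra hne
    exact (hf y p hne).ne dist_eq
  exact tendsto_iff_dist_tendsto_zero.2 (by simpa only [dist_self] using dist_tendsto hy)

theorem attractionBasin_mem_nhds (hf : Contractive f) (hp : Function.IsFixedPt f p)
    {K : Set X} (hK : IsCompact K) (hKp : K ∈ 𝓝 p) : attractionBasin f p ∈ 𝓝 p := by
  obtain ⟨ε, hε, hball⟩ := Metric.mem_nhds_iff.1 hKp
  filter_upwards [Metric.ball_mem_nhds p hε] with x hx
  have orbit_mem (k : ℕ) : f^[k] x ∈ K :=
    hball <| (antitone_dist_iterate_of_isFixedPt hf.lipschitzWith_one hp x k.zero_le).trans_lt hx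
  obtain ⟨y, -, hy⟩ :=
    hK.exists_mapClusterPt_of_frequently (Frequently.of_forall (f := atTop) orbit_mem)
  exact hf.tendsto_iterate_of_mapClusterPt hp hy

end Contractive

theorem stmt_13_general {X : Type*} [MetricSpace X] {f : X → X} (hf : Contractive f) {p : X}
    (hp : Function.IsFixedPt f p) {K : Set X} (hK : IsCompact K) (hKp : K ∈ 𝓝 p) {x : X}
    (hx : x ∈ connectedComponent p) : Tendsto (f^[·] x) atTop (𝓝 p) := by
  have basin_mem : attractionBasin f p ∈ 𝓝 p := hf.attractionBasin_mem_nhds hp hK hKp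
  have basin_clopen : IsClopen (attractionBasin f p) :=
    ⟨isClosed_attractionBasin
        (equicontinuous_iterate_of_lipschitzWith_one hf.lipschitzWith_one) basin_mem,
      isOpen_attractionBasin hf.lipschitzWith_one.continuous basin_mem⟩
  exact basin_clopen.connectedComponent_subset (mem_of_mem_nhds basin_mem) hx

/-- Nadler's theorem: on a locally compact connected metric
space, a contractive self-map possessing a fixed point has globally convergent
iterates towards that fixed point. -/
theorem stmt_13
    (X : Type*) [MetricSpace X] [LocallyCompactSpace X] [ConnectedSpace X]
    (f : X → X)
    (hcontr : ∀ x y : X, x ≠ y → dist (f x) (f y) < dist x y)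
    (xstar : X) (hfix : f xstar = xstar) :
    ∀ x : X, Tendsto (fun k => f^[k] x) atTop (𝓝 xstar) := by
  obtain ⟨K, hK, hKmem⟩ := exists_compact_mem_nhds xstar
  exact fun x => stmt_13_general hcontr hfix hK hKmem
    (PreconnectedSpace.connectedComponent_eq_univ xstar ▸ Set.mem_univ x)
end

section
/- (Example 2.6 / Appendix A: existence and uniqueness of the fixed-point parameter for the two-participant power-disutility pool.) Let S be a nonnegative integrable random variable with P(S > 0) > 0, and define f(a) = E[ √(aS + (a/2)²) − a/2 ] for a > 0. Then f is strictly increasing on (0, ∞), f(a) → 0 as a → 0⁺, and f(a) → E[S] as a → ∞. Consequently, for every m with 0 < m < E[S] there exists a unique a > 0 such that E[ √(aS + (a/2)²) − a/2 ] = m. -/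
open Set Filter Topology MeasureTheory

/-!
Rationalising the square root gives, for `a > 0` and `s ≥ 0`,
`√(a s + (a/2)²) − a/2 = 2 s / (1 + √(1 + 4 s / a))`. In this form it is clear that the share lies
in `[0, s]`, increases with `a` (strictly if `s > 0`), and tends to `s` as `a → ∞`. Since `S`
dominates the shares, these properties pass to the integral, and the equation `f a = m` is solved by
the intermediate value theorem.
-/

lemma existsUnique_eq_of_strictMonoOn_Ioi {α β : Type*} [ConditionallyCompleteLinearOrder α]
    [TopologicalSpace α] [OrderTopology α] [DenselyOrdered α] [NoMaxOrder α]
    [LinearOrder β] [TopologicalSpace β] [OrderClosedTopology β]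
    {f : α → β} {a : α} {l u m : β} (hmono : StrictMonoOn f (Ioi a))
    (hcont : ContinuousOn f (Ioi a)) (hleft : Tendsto f (𝓝[>] a) (𝓝 l))
    (htop : Tendsto f atTop (𝓝 u)) (hm : m ∈ Ioo l u) : ∃! x, a < x ∧ f x = m := by
  have : Nonempty α := ⟨a⟩
  obtain ⟨x, hx, hfx⟩ := isPreconnected_Ioi.intermediate_value_Ioo
    (le_principal_iff.2 self_mem_nhdsWithin) (le_principal_iff.2 (Ioi_mem_atTop a))
    hcont hleft htop hm
  exact ⟨x, ⟨hx, hfx⟩, fun y hy => hmono.injOn hy.1 hx (hy.2.trans hfx.symm)⟩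

lemma strictMonoOn_integral {α Ω : Type*} [Preorder α] [MeasurableSpace Ω] {μ : Measure Ω}
    {t : Set α} {F : α → Ω → ℝ} (hint : ∀ a ∈ t, Integrable (F a) μ)
    (hmono : ∀ᵐ ω ∂μ, MonotoneOn (fun a => F a ω) t)
    (hstrict : μ {ω | StrictMonoOn (fun a => F a ω) t} ≠ 0) :
    StrictMonoOn (fun a => ∫ ω, F a ω ∂μ) t := by
  intro a ha b hb hab
  have hle : F a ≤ᵐ[μ] F b := hmono.mono fun ω hω => hω ha hb hab.le
  refine (integral_mono_ae (hint a ha) (hint b hb) hle).lt_of_ne fun heq => hstrict ?_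
  have hae : F a =ᵐ[μ] F b := (integral_eq_iff_of_ae_le (hint a ha) (hint b hb) hle).1 heq
  exact measure_mono_null (fun ω hω => (hω ha hb hab).ne) (ae_iff.1 hae)

/-- The share `√(as + (a/2)²) − a/2` of the aggregate loss `s` that participant 2 bears under the
Pareto optimal rule with parameter `a`; meaningful for `a, s ≥ 0`. -/
noncomputable def lossShare (a s : ℝ) : ℝ := √(a * s + (a / 2) ^ 2) - a / 2

section Pointwise

variable {a s : ℝ}

lemma lossShare_eq_div (ha : 0 < a) (hs : 0 ≤ s) :
    lossShare a s = 2 * s / (1 + √(1 + 4 * s / a)) := by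
  have hsqrt : √(a * s + (a / 2) ^ 2) = a / 2 * √(1 + 4 * s / a) := by
    rw [show a * s + (a / 2) ^ 2 = (a / 2) ^ 2 * (1 + 4 * s / a) by field_simp; ring,
      Real.sqrt_mul (sq_nonneg _), Real.sqrt_sq (by positivity)]
  have hsq : a * √(1 + 4 * s / a) ^ 2 = a + 4 * s := by
    rw [Real.sq_sqrt (by positivity)]
    field_simp
  rw [lossShare, hsqrt, eq_div_iff (by positivity)]
  linear_combination hsq / 2

lemma lossShare_nonneg (ha : 0 < a) (hs : 0 ≤ s) : 0 ≤ lossShare a s := by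
  rw [lossShare_eq_div ha hs]
  positivity

lemma lossShare_le (ha : 0 < a) (hs : 0 ≤ s) : lossShare a s ≤ s := by
  have hone : 1 ≤ √(1 + 4 * s / a) := Real.one_le_sqrt.2 (le_add_of_nonneg_right (by positivity))
  rw [lossShare_eq_div ha hs, div_le_iff₀ (by positivity), mul_comm]
  exact mul_le_mul_of_nonneg_left (by linarith) hs

lemma norm_lossShare_le (ha : 0 < a) (hs : 0 ≤ s) : ‖lossShare a s‖ ≤ s := by
  rw [Real.norm_of_nonneg (lossShare_nonneg ha hs)]
  exact lossShare_le ha hs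

lemma monotoneOn_lossShare_left (hs : 0 ≤ s) : MonotoneOn (fun a => lossShare a s) (Ioi 0) := by
  intro a (ha : 0 < a) b (hb : 0 < b) hab
  simp only [lossShare_eq_div ha hs, lossShare_eq_div hb hs]
  gcongr

lemma strictMonoOn_lossShare_left (hs : 0 < s) :
    StrictMonoOn (fun a => lossShare a s) (Ioi 0) := by
  intro a (ha : 0 < a) b (hb : 0 < b) hab
  simp only [lossShare_eq_div ha hs.le, lossShare_eq_div hb hs.le]
  gcongr

lemma continuous_lossShare_left (s : ℝ) : Continuous fun a => lossShare a s := by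
  unfold lossShare
  fun_prop

lemma continuous_lossShare_right (a : ℝ) : Continuous (lossShare a) := by
  unfold lossShare
  fun_prop

lemma lossShare_zero_left (s : ℝ) : lossShare 0 s = 0 := by simp [lossShare]

lemma tendsto_lossShare_atTop (hs : 0 ≤ s) : Tendsto (fun a => lossShare a s) atTop (𝓝 s) := by
  have hdiv : Tendsto (fun a : ℝ => 4 * s / a) atTop (𝓝 0) :=
    tendsto_const_nhds.div_atTop tendsto_id
  have hformula : Tendsto (fun a => 2 * s / (1 + √(1 + 4 * s / a))) atTop
      (𝓝 (2 * s / (1 + √(1 + 0)))) :=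
    tendsto_const_nhds.div ((hdiv.const_add 1).sqrt.const_add 1) (by positivity)
  have hlimit : 2 * s / (1 + √(1 + 0)) = s := by
    rw [add_zero, Real.sqrt_one]
    ring
  rw [hlimit] at hformula
  refine hformula.congr' ?_
  filter_upwards [eventually_gt_atTop 0] with a ha using (lossShare_eq_div ha hs).symm

end Pointwise

section Integral

variable {Ω : Type*} [MeasurableSpace Ω] {μ : Measure Ω} {S : Ω → ℝ}

lemma integrable_lossShare (hS : Integrable S μ) (hS0 : ∀ᵐ ω ∂μ, 0 ≤ S ω) {a : ℝ} (ha : 0 < a) :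
    Integrable (fun ω => lossShare a (S ω)) μ :=
  hS.mono' ((continuous_lossShare_right a).comp_aestronglyMeasurable hS.aestronglyMeasurable)
    (hS0.mono fun _ => norm_lossShare_le ha)

lemma strictMonoOn_integral_lossShare (hS : Integrable S μ) (hS0 : ∀ᵐ ω ∂μ, 0 ≤ S ω)
    (hSpos : 0 < μ {ω | 0 < S ω}) :
    StrictMonoOn (fun a => ∫ ω, lossShare a (S ω) ∂μ) (Ioi 0) :=
  strictMonoOn_integral (fun _ => integrable_lossShare hS hS0)
    (hS0.mono fun _ => monotoneOn_lossShare_left)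
    (hSpos.trans_le (measure_mono fun _ => strictMonoOn_lossShare_left)).ne'

lemma tendsto_integral_lossShare (hS : Integrable S μ) (hS0 : ∀ᵐ ω ∂μ, 0 ≤ S ω)
    {l : Filter ℝ} [l.IsCountablyGenerated] (hl : ∀ᶠ a in l, 0 < a) {g : Ω → ℝ}
    (hlim : ∀ᵐ ω ∂μ, Tendsto (fun a => lossShare a (S ω)) l (𝓝 (g ω))) :
    Tendsto (fun a => ∫ ω, lossShare a (S ω) ∂μ) l (𝓝 (∫ ω, g ω ∂μ)) :=
  tendsto_integral_filter_of_dominated_convergence S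
    (hl.mono fun _ ha => (integrable_lossShare hS hS0 ha).aestronglyMeasurable)
    (hl.mono fun _ ha => hS0.mono fun _ => norm_lossShare_le ha) hS hlim

lemma continuousOn_integral_lossShare (hS : Integrable S μ) (hS0 : ∀ᵐ ω ∂μ, 0 ≤ S ω) :
    ContinuousOn (fun a => ∫ ω, lossShare a (S ω) ∂μ) (Ioi 0) := fun _ _ =>
  tendsto_integral_lossShare hS hS0 self_mem_nhdsWithin
    (ae_of_all _ fun ω => (continuous_lossShare_left (S ω)).continuousWithinAt)

lemma tendsto_integral_lossShare_nhdsGT_zero (hS : Integrable S μ) (hS0 : ∀ᵐ ω ∂μ, 0 ≤ S ω) :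
    Tendsto (fun a => ∫ ω, lossShare a (S ω) ∂μ) (𝓝[>] 0) (𝓝 0) := by
  have h := tendsto_integral_lossShare hS hS0 (l := 𝓝[>] 0) self_mem_nhdsWithin
    (ae_of_all _ fun ω => (continuous_lossShare_left (S ω)).continuousWithinAt (x := 0))
  simpa only [lossShare_zero_left, integral_zero] using h

lemma tendsto_integral_lossShare_atTop (hS : Integrable S μ) (hS0 : ∀ᵐ ω ∂μ, 0 ≤ S ω) :
    Tendsto (fun a => ∫ ω, lossShare a (S ω) ∂μ) atTop (𝓝 (∫ ω, S ω ∂μ)) :=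
  tendsto_integral_lossShare hS hS0 (eventually_gt_atTop 0)
    (hS0.mono fun _ => tendsto_lossShare_atTop)

end Integral

theorem stmt_15_general {Ω : Type*} [MeasurableSpace Ω] {μ : Measure Ω} {S : Ω → ℝ}
    (hS0 : ∀ᵐ ω ∂μ, 0 ≤ S ω) (hS : Integrable S μ) (hSpos : 0 < μ {ω | 0 < S ω}) :
    StrictMonoOn (fun a => ∫ ω, lossShare a (S ω) ∂μ) (Ioi 0) ∧
    Tendsto (fun a => ∫ ω, lossShare a (S ω) ∂μ) (𝓝[>] 0) (𝓝 0) ∧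
    Tendsto (fun a => ∫ ω, lossShare a (S ω) ∂μ) atTop (𝓝 (∫ ω, S ω ∂μ)) ∧
    ∀ m : ℝ, 0 < m → m < ∫ ω, S ω ∂μ →
      ∃! a : ℝ, 0 < a ∧ ∫ ω, lossShare a (S ω) ∂μ = m := by
  have hmono := strictMonoOn_integral_lossShare hS hS0 hSpos
  have hcont := continuousOn_integral_lossShare hS hS0
  have hzero := tendsto_integral_lossShare_nhdsGT_zero hS hS0
  have htop := tendsto_integral_lossShare_atTop hS hS0
  exact ⟨hmono, hzero, htop, fun m hm0 hm =>
    existsUnique_eq_of_strictMonoOn_Ioi hmono hcont hzero htop ⟨hm0, hm⟩⟩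

/-- Example 2.6 / Appendix A: for a nonnegative integrable
random variable `S` with `P(S > 0) > 0`, the function
`f(a) = E[√(aS + (a/2)²) − a/2]` is strictly increasing on `(0, ∞)`, tends to
`0` at `0⁺` and to `E[S]` at `∞`; hence for every `0 < m < E[S]` there is a
unique `a > 0` with `f(a) = m`. -/
theorem stmt_15
    (Ω : Type*) [MeasurableSpace Ω] (P : Measure Ω) [IsProbabilityMeasure P]
    (S : Ω → ℝ) (hSmeas : Measurable S)
    (hSnonneg : ∀ᵐ ω ∂P, 0 ≤ S ω)
    (hSint : Integrable S P)
    (hSpos : 0 < P {ω | 0 < S ω}) :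
    StrictMonoOn
      (fun a : ℝ => ∫ ω, (Real.sqrt (a * S ω + (a / 2) ^ 2) - a / 2) ∂P)
      (Ioi 0) ∧
    Tendsto (fun a : ℝ => ∫ ω, (Real.sqrt (a * S ω + (a / 2) ^ 2) - a / 2) ∂P)
      (𝓝[>] 0) (𝓝 0) ∧
    Tendsto (fun a : ℝ => ∫ ω, (Real.sqrt (a * S ω + (a / 2) ^ 2) - a / 2) ∂P)
      atTop (𝓝 (∫ ω, S ω ∂P)) ∧
    ∀ m : ℝ, 0 < m → m < ∫ ω, S ω ∂P →
      ∃! a : ℝ, 0 < a ∧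
        ∫ ω, (Real.sqrt (a * S ω + (a / 2) ^ 2) - a / 2) ∂P = m :=
  stmt_15_general hSnonneg hSint hSpos
end

section
/- (Key comparison lemma in the proof of Proposition 5.2.) Let S and S̃ be nonnegative integrable random variables such that E[g(S)] ≤ E[g(S̃)] for every convex function g : ℝ → ℝ for which both expectations exist (i.e. S is dominated by S̃ in the convex order), and suppose P(S̃ > 0) > 0. If a > 0 and ã > 0 satisfy E[ √(aS + (a/2)²) − a/2 ] = E[ √(ãS̃ + (ã/2)²) − ã/2 ], then ã ≥ a. -/
open Set Filter Topology MeasureTheory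

/-!
Write `c a s = √(a s + (a/2)²) - a/2`. For fixed `a`, `c a` is concave and increasing on `[0, ∞)`
with slope at most `1`, so `-c a`, continued by slope `-1` to the left of `0`, is a convex
decreasing function on the whole line. Hence `E[c a S̃] ≤ E[c a S]` whenever `S ≼_cx S̃`. For fixed
`s > 0`, `c a s` is strictly increasing in `a`, so `ã < a` would give
`E[c ã S̃] < E[c a S̃] ≤ E[c a S]`.
-/

/-- The actuarially fair Pareto optimal contribution of the second participant to a total loss `s`,
with parameter `a`. It has this meaning for `0 < a` and `0 ≤ s`; for very negative `s` the square
root takes its junk value `0`. -/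
noncomputable def contribution (a s : ℝ) : ℝ := √(a * s + (a / 2) ^ 2) - a / 2

/-- The decreasing convex order between the laws of `X` and `Y`: `E[g(X)] ≤ E[g(Y)]` for all convex
decreasing `g : ℝ → ℝ` for which both expectations exist. It is weaker than the convex order, and
amounts to second-order stochastic dominance of `X` over `Y`. -/
def DecreasingConvexLE {Ω Ω' : Type*} [MeasurableSpace Ω] [MeasurableSpace Ω']
    (X : Ω → ℝ) (Y : Ω' → ℝ) (μ : Measure Ω) (ν : Measure Ω') : Prop :=
  ∀ g : ℝ → ℝ, ConvexOn ℝ univ g → Antitone g →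
    Integrable (fun ω => g (X ω)) μ → Integrable (fun ω => g (Y ω)) ν →
      ∫ ω, g (X ω) ∂μ ≤ ∫ ω, g (Y ω) ∂ν

lemma convexOn_negPart_sub_comp_posPart {f : ℝ → ℝ} (hf : ConcaveOn ℝ (Ici 0) f)
    (hmono : MonotoneOn (fun s => s - f s) (Ici 0)) :
    ConvexOn ℝ univ fun s => s⁻ - f s⁺ := by
  have himage : (fun s : ℝ => s⁺) '' univ ⊆ Ici 0 := by
    rintro _ ⟨s, -, rfl⟩
    exact posPart_nonneg s
  have himage_eq : (fun s : ℝ => s⁺) '' univ = Ici 0 :=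
    himage.antisymm fun s hs => ⟨s, mem_univ s, posPart_eq_self.2 hs⟩
  have hpos : ConvexOn ℝ univ fun s : ℝ => s⁺ :=
    (convexOn_id convex_univ).sup (convexOn_const 0 convex_univ)
  have hcomp : ConvexOn ℝ univ ((fun s => s - f s) ∘ fun s => s⁺) :=
    ConvexOn.comp (himage_eq ▸ (convexOn_id (convex_Ici 0)).sub hf) hpos (hmono.mono himage)
  refine (hcomp.sub (concaveOn_id convex_univ)).congr fun s _ => ?_
  have hs : s⁺ - s⁻ = s := posPart_sub_negPart s
  simp only [Pi.sub_apply, Function.comp_apply, id]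
  linarith

section Contribution

variable {a s : ℝ}

lemma contribution_zero (ha : 0 ≤ a) : contribution a 0 = 0 := by
  simp [contribution, Real.sqrt_sq (div_nonneg ha zero_le_two)]

lemma monotone_contribution (ha : 0 ≤ a) : Monotone (contribution a) := by
  intro s t hst
  unfold contribution
  gcongr

lemma contribution_nonneg (ha : 0 ≤ a) (hs : 0 ≤ s) : 0 ≤ contribution a s :=
  (contribution_zero ha).symm.trans_le (monotone_contribution ha hs)

lemma contribution_sq (ha : 0 ≤ a) (hs : 0 ≤ s) :
    contribution a s ^ 2 = a * (s - contribution a s) := by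
  have hsqrt : √(a * s + (a / 2) ^ 2) ^ 2 = a * s + (a / 2) ^ 2 := Real.sq_sqrt (by positivity)
  unfold contribution
  linear_combination hsqrt

lemma monotoneOn_sub_contribution (ha : 0 < a) :
    MonotoneOn (fun s => s - contribution a s) (Ici 0) := by
  have hsub : EqOn (fun s => contribution a s ^ 2 / a) (fun s => s - contribution a s) (Ici 0) :=
    fun s hs => by simp only [contribution_sq ha.le hs, mul_div_cancel_left₀ _ ha.ne']
  refine MonotoneOn.congr (fun s hs t _ hst => ?_) hsub
  have hnonneg := contribution_nonneg ha.le hs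
  have hle := monotone_contribution ha.le hst
  gcongr

lemma contribution_le_self (ha : 0 < a) (hs : 0 ≤ s) : contribution a s ≤ s := by
  simpa [contribution_zero ha.le] using
    monotoneOn_sub_contribution ha (mem_Ici.2 le_rfl) hs hs

lemma concaveOn_contribution (ha : 0 ≤ a) : ConcaveOn ℝ (Ici 0) (contribution a) := by
  let radicand : ℝ →ᵃ[ℝ] ℝ := a • AffineMap.id ℝ ℝ + AffineMap.const ℝ ℝ ((a / 2) ^ 2)
  have hnonneg : Ici 0 ⊆ radicand ⁻¹' Ici 0 := fun s (hs : 0 ≤ s) =>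
    show 0 ≤ a * s + (a / 2) ^ 2 by positivity
  exact ((Real.strictConcaveOn_sqrt.concaveOn.comp_affineMap radicand).subset hnonneg
    (convex_Ici 0)).sub (convexOn_const (a / 2) (convex_Ici 0))

lemma contribution_eq_mul (ha : 0 < a) :
    contribution a s = a * ((√(1 + 4 * s / a) - 1) / 2) := by
  have hradicand : a * s + (a / 2) ^ 2 = (a / 2) ^ 2 * (1 + 4 * s / a) := by
    field_simp
    ring
  rw [contribution, hradicand, Real.sqrt_mul (sq_nonneg _), Real.sqrt_sq (by positivity)]
  ring

lemma contribution_eq_div (ha : 0 < a) (hs : 0 ≤ s) :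
    contribution a s = 2 * s / (1 + √(1 + 4 * s / a)) := by
  have hsqrt : √(1 + 4 * s / a) ^ 2 = 1 + 4 * s / a := Real.sq_sqrt (by positivity)
  rw [contribution_eq_mul ha, eq_div_iff (by positivity)]
  linear_combination a / 2 * hsqrt + 2 * mul_div_cancel₀ s ha.ne'

lemma monotoneOn_contribution_left (hs : 0 ≤ s) :
    MonotoneOn (fun a => contribution a s) (Ioi 0) := by
  intro a (ha : 0 < a) b hb hab
  simp only [contribution_eq_div ha hs, contribution_eq_div hb hs]
  gcongr

lemma strictMonoOn_contribution_left (hs : 0 < s) :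
    StrictMonoOn (fun a => contribution a s) (Ioi 0) := by
  intro a (ha : 0 < a) b (hb : 0 < b) hab
  simp only [contribution_eq_div ha hs.le, contribution_eq_div hb hs.le]
  gcongr

lemma antitoneOn_contribution_div (hs : 0 ≤ s) :
    AntitoneOn (fun a => contribution a s / a) (Ioi 0) := by
  intro a (ha : 0 < a) b (hb : 0 < b) hab
  simp only [contribution_eq_mul ha, contribution_eq_mul hb, mul_div_cancel_left₀ _ ha.ne',
    mul_div_cancel_left₀ _ hb.ne']
  gcongr

lemma measurable_contribution (a : ℝ) : Measurable (contribution a) := by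
  unfold contribution
  fun_prop

lemma convexOn_negPart_sub_contribution_posPart (ha : 0 < a) :
    ConvexOn ℝ univ fun s => s⁻ - contribution a s⁺ :=
  convexOn_negPart_sub_comp_posPart (concaveOn_contribution ha.le) (monotoneOn_sub_contribution ha)

lemma antitone_negPart_sub_contribution_posPart (ha : 0 ≤ a) :
    Antitone fun s => s⁻ - contribution a s⁺ := fun _ _ hst =>
  sub_le_sub (negPart_anti hst) (monotone_contribution ha (posPart_mono hst))

end Contribution

section Expectation

variable {Ω Ω' : Type*} [MeasurableSpace Ω] [MeasurableSpace Ω'] {μ : Measure Ω} {ν : Measure Ω'}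
  {X : Ω → ℝ} {Y : Ω' → ℝ} {a b : ℝ}

lemma integrable_contribution (ha : 0 < a) (hX : ∀ᵐ ω ∂μ, 0 ≤ X ω) (hXint : Integrable X μ) :
    Integrable (fun ω => contribution a (X ω)) μ := by
  refine hXint.mono'
    ((measurable_contribution a).comp_aemeasurable hXint.aemeasurable).aestronglyMeasurable ?_
  filter_upwards [hX] with ω hω
  rw [Real.norm_of_nonneg (contribution_nonneg ha.le hω)]
  exact contribution_le_self ha hω

lemma integrable_contribution_of_le (hb : 0 < b) (hba : b ≤ a) (hXmeas : AEMeasurable X μ)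
    (hX : ∀ᵐ ω ∂μ, 0 ≤ X ω) (hXb : Integrable (fun ω => contribution b (X ω)) μ) :
    Integrable (fun ω => contribution a (X ω)) μ := by
  have ha : 0 < a := hb.trans_le hba
  refine (hXb.div_const b |>.const_mul a).mono'
    ((measurable_contribution a).comp_aemeasurable hXmeas).aestronglyMeasurable ?_
  filter_upwards [hX] with ω hω
  rw [Real.norm_of_nonneg (contribution_nonneg ha.le hω), ← div_le_iff₀' ha]
  exact antitoneOn_contribution_div hω hb ha hba

lemma integral_contribution_le_of_decreasingConvexLE (ha : 0 < a)
    (hX : ∀ᵐ ω ∂μ, 0 ≤ X ω) (hY : ∀ᵐ ω ∂ν, 0 ≤ Y ω)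
    (hXa : Integrable (fun ω => contribution a (X ω)) μ)
    (hYa : Integrable (fun ω => contribution a (Y ω)) ν) (hXY : DecreasingConvexLE X Y μ ν) :
    ∫ ω, contribution a (Y ω) ∂ν ≤ ∫ ω, contribution a (X ω) ∂μ := by
  have heq_neg {s : ℝ} (hs : 0 ≤ s) : s⁻ - contribution a s⁺ = -contribution a s := by
    rw [negPart_eq_zero.2 hs, posPart_eq_self.2 hs, zero_sub]
  have hXeq : (fun ω => (X ω)⁻ - contribution a (X ω)⁺) =ᵐ[μ] fun ω => -contribution a (X ω) :=
    hX.mono fun _ => heq_neg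
  have hYeq : (fun ω => (Y ω)⁻ - contribution a (Y ω)⁺) =ᵐ[ν] fun ω => -contribution a (Y ω) :=
    hY.mono fun _ => heq_neg
  have hle := hXY _ (convexOn_negPart_sub_contribution_posPart ha)
    (antitone_negPart_sub_contribution_posPart ha.le)
    (hXa.neg.congr hXeq.symm) (hYa.neg.congr hYeq.symm)
  rw [integral_congr_ae hXeq, integral_congr_ae hYeq, integral_neg, integral_neg] at hle
  exact neg_le_neg_iff.1 hle

lemma integral_contribution_lt_of_lt (hb : 0 < b) (hba : b < a) (hX : ∀ᵐ ω ∂μ, 0 ≤ X ω)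
    (hXb : Integrable (fun ω => contribution b (X ω)) μ)
    (hXa : Integrable (fun ω => contribution a (X ω)) μ) (hXpos : 0 < μ {ω | 0 < X ω}) :
    ∫ ω, contribution b (X ω) ∂μ < ∫ ω, contribution a (X ω) ∂μ := by
  have ha : 0 < a := hb.trans hba
  rw [← sub_pos, ← integral_sub hXa hXb]
  refine (integral_pos_iff_support_of_nonneg_ae ?_ (hXa.sub hXb)).2 ?_
  · filter_upwards [hX] with ω hω
    exact sub_nonneg.2 (monotoneOn_contribution_left hω hb ha hba.le)
  · refine hXpos.trans_le (measure_mono fun ω hω => ?_)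
    exact (sub_pos.2 (strictMonoOn_contribution_left hω hb ha hba)).ne'

theorem stmt_18_general (hYmeas : AEMeasurable Y ν)
    (hX : ∀ᵐ ω ∂μ, 0 ≤ X ω) (hY : ∀ᵐ ω ∂ν, 0 ≤ Y ω) (hYpos : 0 < ν {ω | 0 < Y ω})
    (hXY : DecreasingConvexLE X Y μ ν) (hb : 0 < b)
    (hXa : Integrable (fun ω => contribution a (X ω)) μ)
    (hYb : Integrable (fun ω => contribution b (Y ω)) ν)
    (hle : ∫ ω, contribution a (X ω) ∂μ ≤ ∫ ω, contribution b (Y ω) ∂ν) :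
    a ≤ b := by
  by_contra! hba
  have hYa : Integrable (fun ω => contribution a (Y ω)) ν :=
    integrable_contribution_of_le hb hba.le hYmeas hY hYb
  refine hle.not_gt ?_
  calc ∫ ω, contribution b (Y ω) ∂ν
    _ < ∫ ω, contribution a (Y ω) ∂ν := integral_contribution_lt_of_lt hb hba hY hYb hYa hYpos
    _ ≤ ∫ ω, contribution a (X ω) ∂μ :=
      integral_contribution_le_of_decreasingConvexLE (hb.trans hba) hX hY hXa hYa hXY

end Expectation

/-- key comparison lemma in the proof of Proposition 5.2: if
`S ≼_cx S̃`, `P(S̃ > 0) > 0`, and `a, ã > 0` satisfy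
`E[√(aS + (a/2)²) − a/2] = E[√(ãS̃ + (ã/2)²) − ã/2]`, then `ã ≥ a`. -/
theorem stmt_18
    (Ω : Type*) [MeasurableSpace Ω] (P : Measure Ω) [IsProbabilityMeasure P]
    (S St : Ω → ℝ) (hSmeas : Measurable S) (hStmeas : Measurable St)
    (hSnonneg : ∀ᵐ ω ∂P, 0 ≤ S ω) (hStnonneg : ∀ᵐ ω ∂P, 0 ≤ St ω)
    (hSint : Integrable S P) (hStint : Integrable St P)
    (hcx : ∀ g : ℝ → ℝ, ConvexOn ℝ Set.univ g →
      Integrable (fun ω => g (S ω)) P → Integrable (fun ω => g (St ω)) P →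
      ∫ ω, g (S ω) ∂P ≤ ∫ ω, g (St ω) ∂P)
    (hStpos : 0 < P {ω | 0 < St ω})
    (a at_ : ℝ) (ha : 0 < a) (hat : 0 < at_)
    (heq : ∫ ω, (Real.sqrt (a * S ω + (a / 2) ^ 2) - a / 2) ∂P =
      ∫ ω, (Real.sqrt (at_ * St ω + (at_ / 2) ^ 2) - at_ / 2) ∂P) :
    a ≤ at_ := by
  exact stmt_18_general hStmeas.aemeasurable hSnonneg hStnonneg hStpos (fun g hg _ => hcx g hg) hat
    (integrable_contribution ha hSnonneg hSint) (integrable_contribution hat hStnonneg hStint)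
    heq.le
end

section
/- (Proposition 5.2: convex order comparison of AFPO risk-sharing rules for Gamma losses.) Let μ ≥ μ̃ > 0 and λ, λ̃ > 0 with μ/λ = μ̃/λ̃, let S have the Gamma distribution with shape μ and rate λ, and let S̃ have the Gamma distribution with shape μ̃ and rate λ̃ (so that E[S] = E[S̃] = μ/λ and S ≼_cx S̃). Fix m with 0 < m < μ/λ, and let a > 0 and ã > 0 be the unique solutions of E[ √(aS + (a/2)²) − a/2 ] = m and E[ √(ãS̃ + (ã/2)²) − ã/2 ] = m. Define h₂(s) = √(as + (a/2)²) − a/2 and h₁(s) = s − h₂(s), and likewise h̃₂(s) = √(ãs + (ã/2)²) − ã/2 and h̃₁(s) = s − h̃₂(s). Then for i = 1, 2 and every convex function g : ℝ → ℝ for which the expectations exist, E[g(h_i(S))] ≤ E[g(h̃_i(S̃))]; that is, h_i(S) ≼_cx h̃_i(S̃). -/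
open Set Filter Topology MeasureTheory ProbabilityTheory

/-!
Let `Q` and `R` be the quantile functions of `S` and `S̃` on `(0, 1)`. Both Gamma laws can be
realised on the same space by `Q` and `R`. Since the logarithm of the ratio of their densities is
convex, the distribution functions cross at most once; this persists after rescaling, which says
that `R / Q` is increasing (star order). For increasing transforms `h`, `k` whose inverses `p`, `q`
have a decreasing ratio `q / p`, star order makes `k ∘ R - h ∘ Q` change sign at most once, from
negative to positive, and a supporting line at the crossing point turns equality of means into
convex order.

With `h` and `k` the identity this gives `S ≼_cx S̃`. As `h₂` is concave in the loss and increasing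
in its parameter, the fairness condition then forces `a ≤ ã`, and this is what makes the ratios of
the inverses `x (x + a) / a` of `h₂` and `x + √(a x)` of `h₁` decreasing.
-/

section ConvexOrder

/-- The order of laws on `ℝ` tested by the functions convex on `s`. For `s = univ`
it is the convex order; a smaller `s` gives more test functions. -/
def ConvexLE (s : Set ℝ) (ρ ν : Measure ℝ) : Prop :=
  ∀ g : ℝ → ℝ, ConvexOn ℝ s g → Integrable g ρ → Integrable g ν → ∫ x, g x ∂ρ ≤ ∫ x, g x ∂ν

lemma ConvexLE.mono {s t : Set ℝ} {ρ ν : Measure ℝ} (h : ConvexLE s ρ ν) (hs : Convex ℝ s)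
    (hst : s ⊆ t) : ConvexLE t ρ ν :=
  fun g hg => h g (hg.subset hst hs)

variable {Ω Ω' : Type*} [MeasurableSpace Ω] [MeasurableSpace Ω'] {P : Measure Ω} {P' : Measure Ω'}
  {ρ ν : Measure ℝ}

lemma ConvexLE.integral_comp_le (h : ConvexLE univ ρ ν) {X : Ω → ℝ} {Y : Ω' → ℝ}
    (hX : HasLaw X ρ P) (hY : HasLaw Y ν P') (g : ℝ → ℝ) (hg : ConvexOn ℝ univ g)
    (hgX : Integrable (fun ω => g (X ω)) P) (hgY : Integrable (fun ω => g (Y ω)) P') :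
    ∫ ω, g (X ω) ∂P ≤ ∫ ω, g (Y ω) ∂P' := by
  have hgc : Continuous g := continuousOn_univ.1 (hg.continuousOn isOpen_univ)
  have hgρ : Integrable g ρ := by
    rw [← hX.map_eq]
    exact (integrable_map_measure hgc.aestronglyMeasurable hX.aemeasurable).2 hgX
  have hgν : Integrable g ν := by
    rw [← hY.map_eq]
    exact (integrable_map_measure hgc.aestronglyMeasurable hY.aemeasurable).2 hgY
  calc ∫ ω, g (X ω) ∂P = ∫ x, g x ∂ρ := hX.integral_comp hgρ.aestronglyMeasurable
    _ ≤ ∫ x, g x ∂ν := h g hg hgρ hgν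
    _ = ∫ ω, g (Y ω) ∂P' := (hY.integral_comp hgν.aestronglyMeasurable).symm

lemma add_rightDeriv_mul_sub_le_of_convexOn {s : Set ℝ} {g : ℝ → ℝ} (hg : ConvexOn ℝ s g) {x y : ℝ}
    (hx : x ∈ interior s) (hy : y ∈ s) : g x + derivWithin g (Ioi x) x * (y - x) ≤ g y := by
  rcases lt_trichotomy x y with h | rfl | h
  · have hslope := hg.rightDeriv_le_slope_of_mem_interior hx hy h
    rw [slope_def_field, le_div_iff₀ (sub_pos.2 h)] at hslope
    linarith
  · simp
  · have hslope := (hg.slope_le_leftDeriv_of_mem_interior hy hx h).trans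
      (hg.leftDeriv_le_rightDeriv_of_mem_interior hx)
    rw [slope_def_field, div_le_iff₀ (sub_pos.2 h)] at hslope
    linarith

lemma exists_mul_sub_le_sub_of_cross {ι : Type*} {s : Set ℝ} (hs : IsOpen s) {X Y : ι → ℝ}
    (hXs : ∀ i, X i ∈ s) (hYs : ∀ i, Y i ∈ s)
    (hcross : ∀ i j, Y i < X i → X j < Y j → X i ≤ X j)
    (hneg : ∃ i, Y i < X i) (hpos : ∃ i, X i < Y i) {g : ℝ → ℝ} (hg : ConvexOn ℝ s g) :
    ∃ c, ∀ i, c * (Y i - X i) ≤ g (Y i) - g (X i) := by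
  set D : ℝ → ℝ := fun x => derivWithin g (Ioi x) x
  have hXint : ∀ i, X i ∈ interior s := fun i => by rw [hs.interior_eq]; exact hXs i
  -- The slope `c` separates the right derivatives at `X` on the two sides of the crossing.
  obtain ⟨c, hc_neg, hc_pos⟩ := exists_between_of_forall_le
    (s := (fun i => D (X i)) '' {i | Y i < X i}) (t := (fun i => D (X i)) '' {i | X i < Y i})
    (Set.Nonempty.image _ hneg) (Set.Nonempty.image _ hpos) <| by
      rintro _ ⟨i, hi, rfl⟩ _ ⟨j, hj, rfl⟩
      exact hg.monotoneOn_rightDeriv (hXint i) (hXint j) (hcross i j hi hj)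
  refine ⟨c, fun i => ?_⟩
  have hline : D (X i) * (Y i - X i) ≤ g (Y i) - g (X i) := by
    linarith [add_rightDeriv_mul_sub_le_of_convexOn hg (hXint i) (hYs i)]
  refine le_trans ?_ hline
  rcases lt_trichotomy (Y i) (X i) with h | h | h
  · exact mul_le_mul_of_nonpos_right (hc_neg ⟨i, h, rfl⟩) (sub_neg.2 h).le
  · simp [h]
  · exact mul_le_mul_of_nonneg_right (hc_pos ⟨i, h, rfl⟩) (sub_pos.2 h).le

theorem convexLE_of_hasLaw_of_cross {s : Set ℝ} (hs : IsOpen s) {X Y : Ω → ℝ}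
    (hX : HasLaw X ρ P) (hY : HasLaw Y ν P) (hXs : ∀ ω, X ω ∈ s) (hYs : ∀ ω, Y ω ∈ s)
    (iX : Integrable X P) (iY : Integrable Y P) (hmean : ∫ ω, X ω ∂P = ∫ ω, Y ω ∂P)
    (hcross : ∀ ω ω', Y ω < X ω → X ω' < Y ω' → X ω ≤ X ω') : ConvexLE s ρ ν := by
  intro g hg hgρ hgν
  have igX : Integrable (g ∘ X) P := (hX.map_eq ▸ hgρ).comp_aemeasurable hX.aemeasurable
  have igY : Integrable (g ∘ Y) P := (hY.map_eq ▸ hgν).comp_aemeasurable hY.aemeasurable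
  rw [← hX.integral_comp hgρ.aestronglyMeasurable, ← hY.integral_comp hgν.aestronglyMeasurable]
  by_cases hneg : ∃ ω, Y ω < X ω
  · by_cases hpos : ∃ ω, X ω < Y ω
    · obtain ⟨c, hc⟩ := exists_mul_sub_le_sub_of_cross hs hXs hYs hcross hneg hpos hg
      have hmono : ∫ ω, c * (Y ω - X ω) ∂P ≤ ∫ ω, (g ∘ Y) ω - (g ∘ X) ω ∂P :=
        integral_mono ((iY.sub iX).const_mul c) (igY.sub igX) hc
      rwa [integral_const_mul, integral_sub iY iX, hmean, sub_self, mul_zero,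
        integral_sub igY igX, sub_nonneg] at hmono
    · push Not at hpos
      have hae : Y =ᵐ[P] X := (integral_eq_iff_of_ae_le iY iX (ae_of_all _ hpos)).1 hmean.symm
      exact (integral_congr_ae (hae.fun_comp g)).ge
  · push Not at hneg
    have hae : X =ᵐ[P] Y := (integral_eq_iff_of_ae_le iX iY (ae_of_all _ hneg)).1 hmean
    exact (integral_congr_ae (hae.fun_comp g)).le

end ConvexOrder

section Quantile

attribute [local instance] Measure.Subtype.measureSpace

/-- The generalized inverse of the distribution function of `ρ`. It lives on the open unit interval,
since at the end points the infimum may be a junk value. -/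
noncomputable def quantile (ρ : Measure ℝ) (u : Ioo (0 : ℝ) 1) : ℝ := sInf {x | (u : ℝ) ≤ cdf ρ x}

variable {ρ ν : Measure ℝ}

lemma quantile_le_iff {u : Ioo (0 : ℝ) 1} {x : ℝ} : quantile ρ u ≤ x ↔ (u : ℝ) ≤ cdf ρ x := by
  obtain ⟨b, hb⟩ := ((tendsto_cdf_atBot ρ).eventually (gt_mem_nhds u.2.1)).exists
  obtain ⟨c, hc⟩ := ((tendsto_cdf_atTop ρ).eventually (lt_mem_nhds u.2.2)).exists
  have hbdd : BddBelow {x | (u : ℝ) ≤ cdf ρ x} :=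
    ⟨b, fun y hy => le_of_not_gt fun h => (hy.trans (monotone_cdf ρ h.le)).not_gt hb⟩
  refine ⟨fun h => ?_, fun h => csInf_le hbdd h⟩
  rw [← (cdf ρ).iInf_Ioi_eq x]
  refine le_ciInf fun y => ?_
  obtain ⟨z, hz, hzy⟩ := exists_lt_of_csInf_lt (s := {x | (u : ℝ) ≤ cdf ρ x}) ⟨c, hc.le⟩
    (h.trans_lt y.2)
  exact hz.trans (monotone_cdf ρ hzy.le)

lemma lt_quantile_iff {u : Ioo (0 : ℝ) 1} {x : ℝ} : x < quantile ρ u ↔ cdf ρ x < u := by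
  rw [← not_le, quantile_le_iff, not_le]

lemma monotone_quantile : Monotone (quantile ρ) := fun _ _ huv =>
  quantile_le_iff.2 (le_trans huv (quantile_le_iff.1 le_rfl))

lemma hasLaw_quantile [IsProbabilityMeasure ρ] : HasLaw (quantile ρ) ρ volume where
  aemeasurable := monotone_quantile.measurable.aemeasurable
  map_eq := by
    refine (Measure.ext_of_Iic ρ _ fun x => ?_).symm
    have hpre : quantile ρ ⁻¹' Iic x = Subtype.val ⁻¹' Iic (cdf ρ x) :=
      Set.ext fun u => quantile_le_iff
    have hae : (Ioo 0 1 ∩ Iic (cdf ρ x) : Set ℝ) =ᵐ[volume]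
        (Ioc 0 1 ∩ Iic (cdf ρ x) : Set ℝ) :=
      Ioo_ae_eq_Ioc.inter (ae_eq_refl _)
    rw [Measure.map_apply monotone_quantile.measurable measurableSet_Iic, hpre,
      volume_preimage_coe measurableSet_Ioo.nullMeasurableSet measurableSet_Iic, inter_comm,
      measure_congr hae, Ioc_inter_Iic, inf_eq_right.2 (cdf_le_one ρ x), Real.volume_Ioc, sub_zero,
      ofReal_cdf]

lemma quantile_pos [IsProbabilityMeasure ρ] (hρ : ∀ᵐ x ∂ρ, 0 < x) (u : Ioo (0 : ℝ) 1) :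
    0 < quantile ρ u := by
  have hzero : cdf ρ 0 = 0 := by
    rw [cdf_eq_real, measureReal_eq_zero_iff, measure_eq_zero_iff_ae_notMem]
    filter_upwards [hρ] with x hx using hx.not_ge
  rw [lt_quantile_iff, hzero]
  exact u.2.1

end Quantile

section StarOrder

attribute [local instance] Measure.Subtype.measureSpace

/-- The star order of laws on `(0, ∞)`: the ratio of the quantile functions is increasing. -/
def StarLE (ρ ν : Measure ℝ) : Prop := Monotone fun u => quantile ν u / quantile ρ u

variable {ρ ν : Measure ℝ} [IsProbabilityMeasure ρ] [IsProbabilityMeasure ν]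

lemma starLE_of_cdf_cross (hρ : ∀ᵐ x ∂ρ, 0 < x) (hν : ∀ᵐ x ∂ν, 0 < x)
    (hcross : ∀ c, 0 < c → ∀ x y, x < y → cdf ν (c * x) < cdf ρ x → cdf ν (c * y) ≤ cdf ρ y) :
    StarLE ρ ν := by
  intro u v huv
  by_contra! hlt
  obtain ⟨c, hcv, hcu⟩ := exists_between hlt
  have hc : 0 < c := (div_pos (quantile_pos hν v) (quantile_pos hρ v)).trans hcv
  rw [div_lt_iff₀ (quantile_pos hρ v)] at hcv
  rw [lt_div_iff₀ (quantile_pos hρ u), lt_quantile_iff] at hcu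
  set x := quantile ρ u
  set y := quantile ν v / c
  have hcy : c * y = quantile ν v := mul_div_cancel₀ _ hc.ne'
  have hFx : (u : ℝ) ≤ cdf ρ x := quantile_le_iff.1 le_rfl
  have hGy : (v : ℝ) ≤ cdf ν (c * y) := quantile_le_iff.1 hcy.ge
  have hFy : cdf ρ y < v := lt_quantile_iff.1 ((div_lt_iff₀' hc).2 hcv)
  rcases lt_or_ge x y with hxy | hyx
  · exact (hcross c hc x y hxy (hcu.trans_le hFx)).not_gt (hFy.trans_le hGy)
  · have hG : cdf ν (c * y) ≤ cdf ν (c * x) := monotone_cdf ν (by gcongr)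
    exact ((Subtype.coe_le_coe.2 huv).trans (hGy.trans hG)).not_gt hcu

lemma StarLE.comp_quantile_cross (hstar : StarLE ρ ν) (hρ : ∀ᵐ x ∂ρ, 0 < x)
    (hν : ∀ᵐ x ∂ν, 0 < x) {h k p q : ℝ → ℝ}
    (hh : MapsTo h (Ioi 0) (Ioi 0)) (hk : MapsTo k (Ioi 0) (Ioi 0))
    (hp : LeftInvOn p h (Ioi 0)) (hq : LeftInvOn q k (Ioi 0))
    (hp_mono : StrictMonoOn p (Ioi 0)) (hq_mono : StrictMonoOn q (Ioi 0))
    (hratio : AntitoneOn (fun x => q x / p x) (Ioi 0)) {u v : Ioo (0 : ℝ) 1}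
    (hu : k (quantile ν u) < h (quantile ρ u)) (hv : h (quantile ρ v) < k (quantile ν v)) :
    h (quantile ρ u) ≤ h (quantile ρ v) := by
  have hQ : ∀ w, 0 < quantile ρ w := quantile_pos hρ
  have hR : ∀ w, 0 < quantile ν w := quantile_pos hν
  by_contra! hlt
  set x := h (quantile ρ v)
  set y := h (quantile ρ u)
  have hx : x ∈ Ioi 0 := hh (hQ v)
  have hy : y ∈ Ioi 0 := hh (hQ u)
  have hpx : p x = quantile ρ v := hp (hQ v)
  have hpy : p y = quantile ρ u := hp (hQ u)
  have hqx : q x < quantile ν v := (hq_mono hx (hk (hR v)) hv).trans_eq (hq (hR v))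
  have hqy : quantile ν u < q y := (hq (hR u)).symm.trans_lt (hq_mono (hk (hR u)) hy hu)
  have hvu : v ≤ u := (monotone_quantile.reflect_lt (hpx ▸ hpy ▸ hp_mono hx hy hlt)).le
  refine lt_irrefl (q y / p y) ?_
  calc q y / p y ≤ q x / p x := hratio hx hy hlt.le
    _ < quantile ν v / quantile ρ v := by rw [hpx]; exact div_lt_div_of_pos_right hqx (hQ v)
    _ ≤ quantile ν u / quantile ρ u := hstar hvu
    _ < q y / p y := by rw [hpy]; exact div_lt_div_of_pos_right hqy (hQ u)

theorem convexLE_map_of_starLE (hρ : ∀ᵐ x ∂ρ, 0 < x) (hν : ∀ᵐ x ∂ν, 0 < x) (hstar : StarLE ρ ν)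
    {h k p q : ℝ → ℝ} (ih : Integrable h ρ) (ik : Integrable k ν)
    (hmean : ∫ x, h x ∂ρ = ∫ x, k x ∂ν)
    (hh : MapsTo h (Ioi 0) (Ioi 0)) (hk : MapsTo k (Ioi 0) (Ioi 0))
    (hp : LeftInvOn p h (Ioi 0)) (hq : LeftInvOn q k (Ioi 0))
    (hp_mono : StrictMonoOn p (Ioi 0)) (hq_mono : StrictMonoOn q (Ioi 0))
    (hratio : AntitoneOn (fun x => q x / p x) (Ioi 0)) :
    ConvexLE (Ioi 0) (ρ.map h) (ν.map k) := by
  have lawQ : HasLaw (quantile ρ) ρ volume := hasLaw_quantile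
  have lawR : HasLaw (quantile ν) ν volume := hasLaw_quantile
  refine convexLE_of_hasLaw_of_cross isOpen_Ioi
    (.comp ⟨ih.aestronglyMeasurable.aemeasurable, rfl⟩ lawQ)
    (.comp ⟨ik.aestronglyMeasurable.aemeasurable, rfl⟩ lawR)
    (fun u => hh (quantile_pos hρ u)) (fun u => hk (quantile_pos hν u))
    ((lawQ.map_eq.symm ▸ ih).comp_aemeasurable lawQ.aemeasurable)
    ((lawR.map_eq.symm ▸ ik).comp_aemeasurable lawR.aemeasurable) ?_
    fun u v => hstar.comp_quantile_cross hρ hν hh hk hp hq hp_mono hq_mono hratio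
  rw [lawQ.integral_comp ih.aestronglyMeasurable, lawR.integral_comp ik.aestronglyMeasurable, hmean]

lemma convexLE_of_starLE (hρ : ∀ᵐ x ∂ρ, 0 < x) (hν : ∀ᵐ x ∂ν, 0 < x) (hstar : StarLE ρ ν)
    (iρ : Integrable id ρ) (iν : Integrable id ν) (hmean : ∫ x, x ∂ρ = ∫ x, x ∂ν) :
    ConvexLE (Ioi 0) ρ ν := by
  have hratio : AntitoneOn (fun x : ℝ => id x / id x) (Ioi 0) :=
    antitoneOn_const.congr fun x hx => (div_self (ne_of_gt hx)).symm
  simpa only [Measure.map_id] using convexLE_map_of_starLE hρ hν hstar iρ iν hmean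
    (mapsTo_id _) (mapsTo_id _) (fun _ _ => rfl) (fun _ _ => rfl) strictMonoOn_id strictMonoOn_id
    hratio

end StarOrder

lemma setIntegral_Iic_le_of_cross {μ : Measure ℝ} {f g : ℝ → ℝ} (hf : Integrable f μ)
    (hg : Integrable g μ) (heq : ∫ w, f w ∂μ = ∫ w, g w ∂μ) {t : Set ℝ} (ht : ∀ᵐ w ∂μ, w ∈ t)
    (hcross : ∀ x ∈ t, ∀ y ∈ t, ∀ z ∈ t, x < y → y ≤ z → g x < f x → f y < g y → f z ≤ g z)
    {x y : ℝ} (hxy : x < y) (hlt : ∫ w in Iic x, g w ∂μ < ∫ w in Iic x, f w ∂μ) :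
    ∫ w in Iic y, g w ∂μ ≤ ∫ w in Iic y, f w ∂μ := by
  by_contra! hgt
  obtain ⟨x₁, hx₁, hx₁x, hlt₁⟩ : ∃ x₁ ∈ t, x₁ ≤ x ∧ g x₁ < f x₁ := by
    by_contra! h
    exact hlt.not_ge (setIntegral_mono_on_ae hf.integrableOn hg.integrableOn measurableSet_Iic
      (ht.mono h))
  obtain ⟨x₂, hx₂, hx₂xy, hlt₂⟩ : ∃ x₂ ∈ t, x₂ ∈ Ioc x y ∧ f x₂ < g x₂ := by
    by_contra! h
    have hmid := setIntegral_mono_on_ae hg.integrableOn hf.integrableOn measurableSet_Ioc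
      (ht.mono h)
    rw [← Iic_union_Ioc_eq_Iic hxy.le,
      setIntegral_union (Iic_disjoint_Ioc le_rfl) measurableSet_Ioc hf.integrableOn hf.integrableOn,
      setIntegral_union (Iic_disjoint_Ioc le_rfl) measurableSet_Ioc hg.integrableOn
        hg.integrableOn] at hgt
    linarith
  have htail : ∫ w in Ioi y, f w ∂μ ≤ ∫ w in Ioi y, g w ∂μ :=
    setIntegral_mono_on_ae hf.integrableOn hg.integrableOn measurableSet_Ioi <|
      ht.mono fun z hz hyz => hcross x₁ hx₁ x₂ hx₂ z hz (hx₁x.trans_lt hx₂xy.1)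
        (hx₂xy.2.trans (le_of_lt hyz)) hlt₁ hlt₂
  have hf_split := integral_add_compl (measurableSet_Iic (a := y)) hf
  have hg_split := integral_add_compl (measurableSet_Iic (a := y)) hg
  rw [compl_Iic] at hf_split hg_split
  linarith

section Gamma

variable {α β r s : ℝ}

lemma integrable_gammaPDFReal (hα : 0 < α) (hr : 0 < r) : Integrable (gammaPDFReal α r) := by
  refine ⟨by fun_prop, ?_⟩
  rw [hasFiniteIntegral_iff_ofReal (ae_of_all _ (gammaPDFReal_nonneg hα hr))]
  exact (lintegral_gammaPDF_eq_one hα hr).trans_lt ENNReal.one_lt_top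

lemma integral_gammaPDFReal (hα : 0 < α) (hr : 0 < r) : ∫ x, gammaPDFReal α r x = 1 := by
  rw [integral_eq_lintegral_of_nonneg_ae (ae_of_all _ (gammaPDFReal_nonneg hα hr)) (by fun_prop)]
  exact (congrArg _ (lintegral_gammaPDF_eq_one hα hr)).trans ENNReal.toReal_one

lemma ae_gammaMeasure_pos : ∀ᵐ x ∂gammaMeasure α r, 0 < x := by
  have hmeas : Measurable (gammaPDF α r) := (measurable_gammaPDFReal α r).ennreal_ofReal
  rw [gammaMeasure, ae_withDensity_iff hmeas]
  filter_upwards [Measure.ae_ne volume (0 : ℝ)] with x hx h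
  exact lt_of_le_of_ne (not_lt.1 fun hneg => h (gammaPDF_of_neg hneg)) hx.symm

lemma gammaPDFReal_mul_self (hα : 0 < α) (hr : 0 < r) (x : ℝ) :
    gammaPDFReal α r x * x = α / r * gammaPDFReal (α + 1) r x := by
  unfold gammaPDFReal
  split_ifs with h
  · rcases h.eq_or_lt with rfl | h
    · simp [Real.zero_rpow hα.ne']
    · have hΓ := (Real.Gamma_pos_of_pos hα).ne'
      rw [Real.Gamma_add_one hα.ne', Real.rpow_add_one hr.ne', add_sub_cancel_right,
        Real.rpow_sub_one h.ne']
      field_simp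
  · simp

lemma integrable_id_gammaMeasure (hα : 0 < α) (hr : 0 < r) :
    Integrable id (gammaMeasure α r) := by
  have hmeas : Measurable (gammaPDF α r) := (measurable_gammaPDFReal α r).ennreal_ofReal
  rw [gammaMeasure, integrable_withDensity_iff hmeas (ae_of_all _ fun _ => ENNReal.ofReal_lt_top)]
  refine ((integrable_gammaPDFReal (by linarith : 0 < α + 1) hr).const_mul (α / r)).congr
    (ae_of_all _ fun x => ?_)
  simp only [id, gammaPDF, ENNReal.toReal_ofReal (gammaPDFReal_nonneg hα hr x)]
  rw [mul_comm x, gammaPDFReal_mul_self hα hr]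

lemma integral_id_gammaMeasure (hα : 0 < α) (hr : 0 < r) :
    ∫ x, x ∂gammaMeasure α r = α / r := by
  have hmeas : Measurable (gammaPDF α r) := (measurable_gammaPDFReal α r).ennreal_ofReal
  rw [gammaMeasure, integral_withDensity_eq_integral_toReal_smul hmeas
    (ae_of_all _ fun _ => ENNReal.ofReal_lt_top)]
  simp only [gammaPDF, ENNReal.toReal_ofReal (gammaPDFReal_nonneg hα hr _), smul_eq_mul,
    gammaPDFReal_mul_self hα hr]
  rw [integral_const_mul, integral_gammaPDFReal (by linarith) hr, mul_one]

lemma gammaPDFReal_mul (hr : 0 ≤ r) {c : ℝ} (hc : 0 < c) (x : ℝ) :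
    gammaPDFReal α (r * c) x = c * gammaPDFReal α r (c * x) := by
  simp only [gammaPDFReal, mul_nonneg_iff_of_pos_left hc]
  split_ifs with hx
  · rw [Real.mul_rpow hr hc.le, Real.mul_rpow hc.le hx, Real.rpow_sub_one hc.ne' α]
    field_simp
  · simp

lemma cdf_gammaMeasure_mul (hα : 0 < α) (hr : 0 < r) {c : ℝ} (hc : 0 < c) (x : ℝ) :
    cdf (gammaMeasure α r) (c * x) = cdf (gammaMeasure α (r * c)) x := by
  have hscale := Measure.setIntegral_comp_smul_of_pos volume (gammaPDFReal α r) (Iic x) hc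
  rw [Module.finrank_self, pow_one, LinearOrderedField.smul_Iic hc, smul_eq_mul,
    eq_inv_mul_iff_mul_eq₀ hc.ne'] at hscale
  rw [cdf_gammaMeasure_eq_integral hα hr, cdf_gammaMeasure_eq_integral hα (mul_pos hr hc), ← hscale]
  simp only [gammaPDFReal_mul hr.le hc, smul_eq_mul, integral_const_mul]

lemma log_gammaPDFReal (hα : 0 < α) (hr : 0 < r) {x : ℝ} (hx : 0 < x) :
    Real.log (gammaPDFReal α r x) =
      Real.log (r ^ α / Real.Gamma α) + (α - 1) * Real.log x - r * x := by
  rw [gammaPDFReal, if_pos hx.le, Real.log_mul (by positivity) (by positivity),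
    Real.log_mul (by positivity) (by positivity), Real.log_rpow hx, Real.log_exp]
  ring

lemma convexOn_log_gammaPDFReal_sub (hβ : 0 < β) (hβα : β ≤ α) (hr : 0 < r) (hs : 0 < s) :
    ConvexOn ℝ (Ioi 0) fun x => Real.log (gammaPDFReal β s x) - Real.log (gammaPDFReal α r x) := by
  have hlog : ConvexOn ℝ (Ioi 0) fun x => (α - β) * -Real.log x :=
    strictConcaveOn_log_Ioi.concaveOn.neg.smul (sub_nonneg.2 hβα)
  have hlin : ConvexOn ℝ (Ioi 0) fun x : ℝ => (r - s) * x :=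
    (LinearMap.mulLeft ℝ (r - s)).convexOn (convex_Ioi 0)
  refine ((hlog.add hlin).add_const
    (Real.log (s ^ β / Real.Gamma β) - Real.log (r ^ α / Real.Gamma α))).congr fun x hx => ?_
  rw [log_gammaPDFReal hβ hs hx, log_gammaPDFReal (hβ.trans_le hβα) hr hx]
  simp only [Pi.add_apply]
  ring

lemma gammaPDFReal_le_of_cross (hβ : 0 < β) (hβα : β ≤ α) (hr : 0 < r) (hs : 0 < s) {x y z : ℝ}
    (hx : 0 < x) (hxy : x < y) (hyz : y ≤ z) (hltx : gammaPDFReal β s x < gammaPDFReal α r x)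
    (hlty : gammaPDFReal α r y < gammaPDFReal β s y) :
    gammaPDFReal α r z ≤ gammaPDFReal β s z := by
  have hy := hx.trans hxy
  have hz := hy.trans_le hyz
  have hlogx := Real.log_lt_log (gammaPDFReal_pos hβ hs hx) hltx
  have hlogy := Real.log_lt_log (gammaPDFReal_pos (hβ.trans_le hβα) hr hy) hlty
  have hmax := (convexOn_log_gammaPDFReal_sub hβ hβα hr hs).le_max_of_mem_Icc
    (mem_Ioi.2 hx) (mem_Ioi.2 hz) ⟨hxy.le, hyz⟩
  rw [← Real.log_le_log_iff (gammaPDFReal_pos (hβ.trans_le hβα) hr hz) (gammaPDFReal_pos hβ hs hz)]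
  rcases le_max_iff.1 hmax with h | h <;> linarith

lemma cdf_gammaMeasure_cross (hβ : 0 < β) (hβα : β ≤ α) (hr : 0 < r) (hs : 0 < s) {x y : ℝ}
    (hxy : x < y) (hlt : cdf (gammaMeasure β s) x < cdf (gammaMeasure α r) x) :
    cdf (gammaMeasure β s) y ≤ cdf (gammaMeasure α r) y := by
  have hα := hβ.trans_le hβα
  simp only [cdf_gammaMeasure_eq_integral hα hr, cdf_gammaMeasure_eq_integral hβ hs] at hlt ⊢
  refine setIntegral_Iic_le_of_cross (integrable_gammaPDFReal hα hr) (integrable_gammaPDFReal hβ hs)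
    ((integral_gammaPDFReal hα hr).trans (integral_gammaPDFReal hβ hs).symm)
    (Measure.ae_ne volume (0 : ℝ)) (fun x₁ hx₁ x₂ _ z _ hx₁₂ hx₂z hlt₁ hlt₂ => ?_) hxy hlt
  have hx₁_nonneg : 0 ≤ x₁ := by
    by_contra! hneg
    simp [gammaPDFReal, hneg.not_ge] at hlt₁
  exact gammaPDFReal_le_of_cross hβ hβα hr hs (hx₁_nonneg.lt_of_ne' hx₁) hx₁₂ hx₂z hlt₁ hlt₂

theorem starLE_gammaMeasure (hβ : 0 < β) (hβα : β ≤ α) (hr : 0 < r) (hs : 0 < s) :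
    StarLE (gammaMeasure α r) (gammaMeasure β s) := by
  have := isProbabilityMeasure_gammaMeasure (hβ.trans_le hβα) hr
  have := isProbabilityMeasure_gammaMeasure hβ hs
  refine starLE_of_cdf_cross ae_gammaMeasure_pos ae_gammaMeasure_pos fun c hc x y hxy hlt => ?_
  rw [cdf_gammaMeasure_mul hβ hs hc] at hlt ⊢
  exact cdf_gammaMeasure_cross hβ hβα hr (mul_pos hs hc) hxy hlt

end Gamma

section Share

/-- The share `h₂` of the second participant, with parameter `a`. -/
noncomputable def share₂ (a t : ℝ) : ℝ := √(a * t + (a / 2) ^ 2) - a / 2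

/-- The share `h₁` of the first participant, who bears the rest of the loss. -/
noncomputable def share₁ (a t : ℝ) : ℝ := t - share₂ a t

variable {a b t : ℝ}

@[fun_prop]
lemma measurable_share₂ : Measurable (share₂ a) := by
  unfold share₂
  fun_prop

lemma measurable_share₁ : Measurable (share₁ a) := by
  unfold share₁
  fun_prop

lemma share₂_sq (ha : 0 ≤ a) (ht : 0 ≤ t) : share₂ a t ^ 2 = a * share₁ a t := by
  unfold share₁ share₂
  linear_combination Real.sq_sqrt (by positivity : 0 ≤ a * t + (a / 2) ^ 2)

lemma share₂_pos (ha : 0 < a) (ht : 0 < t) : 0 < share₂ a t :=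
  sub_pos.2 <| Real.lt_sqrt_of_sq_lt <| lt_add_of_pos_left _ (mul_pos ha ht)

lemma share₁_pos (ha : 0 < a) (ht : 0 < t) : 0 < share₁ a t := by
  refine pos_of_mul_pos_right ?_ ha.le
  rw [← share₂_sq ha.le ht.le]
  exact pow_pos (share₂_pos ha ht) 2

lemma leftInvOn_share₂ (ha : 0 < a) :
    LeftInvOn (fun x => x * (x + a) / a) (share₂ a) (Ioi 0) := by
  intro t ht
  have hsq := share₂_sq ha.le (le_of_lt ht)
  rw [div_eq_iff ha.ne']
  unfold share₁ at hsq
  linear_combination hsq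

lemma leftInvOn_share₁ (ha : 0 < a) :
    LeftInvOn (fun x => x + √(a * x)) (share₁ a) (Ioi 0) := by
  intro t ht
  dsimp only
  rw [← share₂_sq ha.le (le_of_lt ht), Real.sqrt_sq (share₂_pos ha ht).le, share₁, sub_add_cancel]

lemma share₂_lt_share₂ (ha : 0 < a) (hab : a < b) (ht : 0 < t) : share₂ a t < share₂ b t := by
  have hb := ha.trans hab
  by_contra! h
  have hshare₁ : share₁ a t ≤ share₁ b t := sub_le_sub_left h t
  have hsq : share₂ a t ^ 2 < share₂ b t ^ 2 := by
    rw [share₂_sq ha.le ht.le, share₂_sq hb.le ht.le]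
    exact mul_lt_mul hab hshare₁ (share₁_pos ha ht) hb.le
  exact hsq.not_ge (pow_le_pow_left₀ (share₂_pos hb ht).le h 2)

lemma concaveOn_share₂ (ha : 0 ≤ a) : ConcaveOn ℝ (Ici 0) (share₂ a) := by
  refine ⟨convex_Ici 0, fun x hx y hy p q hp hq hpq => ?_⟩
  have hmem : ∀ z ∈ Ici (0 : ℝ), a * z + (a / 2) ^ 2 ∈ Ici 0 := fun z hz =>
    add_nonneg (mul_nonneg ha hz) (sq_nonneg _)
  have hsqrt := Real.strictConcaveOn_sqrt.concaveOn.2 (hmem x hx) (hmem y hy) hp hq hpq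
  have harg : p * (a * x + (a / 2) ^ 2) + q * (a * y + (a / 2) ^ 2) =
      a * (p * x + q * y) + (a / 2) ^ 2 := by
    linear_combination (a / 2) ^ 2 * hpq
  simp only [smul_eq_mul, harg] at hsqrt
  simp only [share₂, smul_eq_mul]
  linear_combination hsqrt - a / 2 * hpq

lemma antitoneOn_add_div_add (ha : 0 < a) (hab : a ≤ b) :
    AntitoneOn (fun x => (x + b) / (x + a)) (Ici 0) := by
  intro x (hx : 0 ≤ x) y (hy : 0 ≤ y) hxy
  rw [div_le_div_iff₀ (by positivity) (by positivity)]
  linear_combination mul_nonneg (sub_nonneg.2 hxy) (sub_nonneg.2 hab)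

variable {ρ ν : Measure ℝ}

lemma integrable_share₂ (ha : 0 < a) (hρ : ∀ᵐ x ∂ρ, 0 < x) (iρ : Integrable id ρ) :
    Integrable (share₂ a) ρ := by
  refine iρ.mono' (by fun_prop) ?_
  filter_upwards [hρ] with x hx
  rw [Real.norm_of_nonneg (share₂_pos ha hx).le]
  exact (sub_pos.1 (share₁_pos ha hx)).le

lemma strictMonoOn_integral_share₂ [NeZero ρ] (hρ : ∀ᵐ x ∂ρ, 0 < x) (iρ : Integrable id ρ) :
    StrictMonoOn (fun a => ∫ x, share₂ a x ∂ρ) (Ioi 0) := by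
  intro a ha b hb hab
  have hlt : ∀ᵐ x ∂ρ, share₂ a x < share₂ b x := hρ.mono fun x hx => share₂_lt_share₂ ha hab hx
  have hle : share₂ a ≤ᵐ[ρ] share₂ b := hlt.mono fun x hx => hx.le
  have ia := integrable_share₂ ha hρ iρ
  have ib := integrable_share₂ hb hρ iρ
  refine (integral_mono_ae ia ib hle).lt_of_ne fun heq => ?_
  obtain ⟨x, hx, hx'⟩ := (hlt.and ((integral_eq_iff_of_ae_le ia ib hle).1 heq)).exists
  exact hx.ne hx'

variable [IsProbabilityMeasure ρ] [IsProbabilityMeasure ν]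

theorem StarLE.le_of_integral_share₂_eq (hstar : StarLE ρ ν) (hρ : ∀ᵐ x ∂ρ, 0 < x)
    (hν : ∀ᵐ x ∂ν, 0 < x) (iρ : Integrable id ρ) (iν : Integrable id ν)
    (hmean : ∫ x, x ∂ρ = ∫ x, x ∂ν) (ha : 0 < a) (hb : 0 < b)
    (hfair : ∫ x, share₂ a x ∂ρ = ∫ x, share₂ b x ∂ν) : a ≤ b := by
  have hconvex : ConvexOn ℝ (Ioi 0) (-share₂ a) :=
    ((concaveOn_share₂ ha.le).subset Ioi_subset_Ici_self (convex_Ioi 0)).neg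
  have hle := convexLE_of_starLE hρ hν hstar iρ iν hmean (-share₂ a) hconvex
    (integrable_share₂ ha hρ iρ).neg (integrable_share₂ ha hν iν).neg
  simp only [Pi.neg_apply, integral_neg, neg_le_neg_iff, hfair] at hle
  exact ((strictMonoOn_integral_share₂ hν iν).le_iff_le ha hb).1 hle

theorem StarLE.convexLE_map_share₂ (hstar : StarLE ρ ν) (hρ : ∀ᵐ x ∂ρ, 0 < x)
    (hν : ∀ᵐ x ∂ν, 0 < x) (iρ : Integrable id ρ) (iν : Integrable id ν) (ha : 0 < a) (hab : a ≤ b)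
    (hfair : ∫ x, share₂ a x ∂ρ = ∫ x, share₂ b x ∂ν) :
    ConvexLE (Ioi 0) (ρ.map (share₂ a)) (ν.map (share₂ b)) := by
  have hb := ha.trans_le hab
  have hinv_mono : ∀ {c : ℝ}, 0 < c → StrictMonoOn (fun x => x * (x + c) / c) (Ioi 0) := by
    intro c hc x (hx : 0 < x) y (_ : 0 < y) hxy
    dsimp only
    gcongr
  refine convexLE_map_of_starLE hρ hν hstar (integrable_share₂ ha hρ iρ)
    (integrable_share₂ hb hν iν) hfair (fun t => share₂_pos ha) (fun t => share₂_pos hb)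
    (leftInvOn_share₂ ha) (leftInvOn_share₂ hb) (hinv_mono ha) (hinv_mono hb)
    fun x hx y hy hxy => ?_
  have hratio : ∀ z, 0 < z → z * (z + b) / b / (z * (z + a) / a) = a / b * ((z + b) / (z + a)) :=
    fun z hz => by field_simp
  dsimp only
  rw [hratio x hx, hratio y hy]
  exact mul_le_mul_of_nonneg_left (antitoneOn_add_div_add ha hab (Ioi_subset_Ici_self hx)
    (Ioi_subset_Ici_self hy) hxy) (div_pos ha hb).le

theorem StarLE.convexLE_map_share₁ (hstar : StarLE ρ ν) (hρ : ∀ᵐ x ∂ρ, 0 < x)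
    (hν : ∀ᵐ x ∂ν, 0 < x) (iρ : Integrable id ρ) (iν : Integrable id ν) (ha : 0 < a) (hab : a ≤ b)
    (hfair : ∫ x, share₁ a x ∂ρ = ∫ x, share₁ b x ∂ν) :
    ConvexLE (Ioi 0) (ρ.map (share₁ a)) (ν.map (share₁ b)) := by
  have hb := ha.trans_le hab
  have hinv_mono : ∀ {c : ℝ}, 0 < c → StrictMonoOn (fun x => x + √(c * x)) (Ioi 0) := by
    intro c hc x (hx : 0 < x) y _ hxy
    dsimp only
    gcongr
  refine convexLE_map_of_starLE hρ hν hstar (iρ.sub (integrable_share₂ ha hρ iρ))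
    (iν.sub (integrable_share₂ hb hν iν)) hfair (fun t => share₁_pos ha) (fun t => share₁_pos hb)
    (leftInvOn_share₁ ha) (leftInvOn_share₁ hb) (hinv_mono ha) (hinv_mono hb)
    fun x hx y hy hxy => ?_
  have hratio : ∀ z, 0 < z → (z + √(b * z)) / (z + √(a * z)) =
      (√z + √b) / (√z + √a) := fun z hz => by
    rw [Real.sqrt_mul hb.le, Real.sqrt_mul ha.le, div_eq_div_iff (by positivity) (by positivity)]
    linear_combination (√b - √a) * Real.sq_sqrt hz.le
  dsimp only
  rw [hratio x hx, hratio y hy]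
  exact antitoneOn_add_div_add (Real.sqrt_pos.2 ha) (Real.sqrt_le_sqrt hab) (Real.sqrt_nonneg x)
    (Real.sqrt_nonneg y) (Real.sqrt_le_sqrt hxy)

end Share

theorem stmt_19_general {Ω Ω' : Type*} [MeasurableSpace Ω] [MeasurableSpace Ω'] {P : Measure Ω}
    {P' : Measure Ω'} {ρ ν : Measure ℝ} [IsProbabilityMeasure ρ] [IsProbabilityMeasure ν]
    (hstar : StarLE ρ ν) (hρ : ∀ᵐ x ∂ρ, 0 < x) (hν : ∀ᵐ x ∂ν, 0 < x)
    (iρ : Integrable id ρ) (iν : Integrable id ν) (hmean : ∫ x, x ∂ρ = ∫ x, x ∂ν)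
    {S : Ω → ℝ} {T : Ω' → ℝ} (hS : HasLaw S ρ P) (hT : HasLaw T ν P')
    {a b : ℝ} (ha : 0 < a) (hb : 0 < b)
    (hfair : ∫ ω, share₂ a (S ω) ∂P = ∫ ω, share₂ b (T ω) ∂P') :
    (∀ g : ℝ → ℝ, ConvexOn ℝ univ g →
      Integrable (fun ω => g (share₂ a (S ω))) P → Integrable (fun ω => g (share₂ b (T ω))) P' →
      ∫ ω, g (share₂ a (S ω)) ∂P ≤ ∫ ω, g (share₂ b (T ω)) ∂P') ∧
    (∀ g : ℝ → ℝ, ConvexOn ℝ univ g →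
      Integrable (fun ω => g (share₁ a (S ω))) P → Integrable (fun ω => g (share₁ b (T ω))) P' →
      ∫ ω, g (share₁ a (S ω)) ∂P ≤ ∫ ω, g (share₁ b (T ω)) ∂P') := by
  have ia := integrable_share₂ ha hρ iρ
  have ib := integrable_share₂ hb hν iν
  have hfair₂ : ∫ x, share₂ a x ∂ρ = ∫ x, share₂ b x ∂ν := by
    rw [← hS.integral_comp ia.aestronglyMeasurable, ← hT.integral_comp ib.aestronglyMeasurable]
    exact hfair
  have hfair₁ : ∫ x, share₁ a x ∂ρ = ∫ x, share₁ b x ∂ν := by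
    simp only [share₁]
    rw [integral_sub (f := fun x => x) iρ ia, integral_sub (f := fun x => x) iν ib, hmean, hfair₂]
  have hab : a ≤ b := hstar.le_of_integral_share₂_eq hρ hν iρ iν hmean ha hb hfair₂
  have h₂ := (hstar.convexLE_map_share₂ hρ hν iρ iν ha hab hfair₂).mono (convex_Ioi 0)
    (subset_univ _)
  have h₁ := (hstar.convexLE_map_share₁ hρ hν iρ iν ha hab hfair₁).mono (convex_Ioi 0)
    (subset_univ _)
  exact ⟨h₂.integral_comp_le (.comp ⟨measurable_share₂.aemeasurable, rfl⟩ hS)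
      (.comp ⟨measurable_share₂.aemeasurable, rfl⟩ hT),
    h₁.integral_comp_le (.comp ⟨measurable_share₁.aemeasurable, rfl⟩ hS)
      (.comp ⟨measurable_share₁.aemeasurable, rfl⟩ hT)⟩

/-- Proposition 5.2: for Gamma-distributed aggregate losses
`S ~ Γ(μ, λ)` and `S̃ ~ Γ(μ̃, λ̃)` with `μ ≥ μ̃` and equal means `μ/λ = μ̃/λ̃`
(so that `S ≼_cx S̃`), the corresponding AFPO risk-sharing rules
`h₂(s) = √(as + (a/2)²) − a/2`, `h₁(s) = s − h₂(s)` (and likewise for `S̃`)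
satisfy `h_i(S) ≼_cx h̃_i(S̃)` for `i = 1, 2`. -/
theorem stmt_19
    (Ω : Type*) [MeasurableSpace Ω] (P : Measure Ω) [IsProbabilityMeasure P]
    (μ μt l lt : ℝ) (hμt : 0 < μt) (hμμt : μt ≤ μ) (hl : 0 < l) (hlt : 0 < lt)
    (hmean : μ / l = μt / lt)
    (S St : Ω → ℝ) (hSmeas : Measurable S) (hStmeas : Measurable St)
    (hSlaw : Measure.map S P = gammaMeasure μ l)
    (hStlaw : Measure.map St P = gammaMeasure μt lt)
    (m : ℝ) (hm : 0 < m) (hm' : m < μ / l)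
    (a at_ : ℝ) (ha : 0 < a) (hat : 0 < at_)
    (hfaira : ∫ ω, (Real.sqrt (a * S ω + (a / 2) ^ 2) - a / 2) ∂P = m)
    (hfairat : ∫ ω, (Real.sqrt (at_ * St ω + (at_ / 2) ^ 2) - at_ / 2) ∂P = m) :
    (∀ g : ℝ → ℝ, ConvexOn ℝ Set.univ g →
      Integrable (fun ω => g (Real.sqrt (a * S ω + (a / 2) ^ 2) - a / 2)) P →
      Integrable (fun ω => g (Real.sqrt (at_ * St ω + (at_ / 2) ^ 2) - at_ / 2)) P →
      ∫ ω, g (Real.sqrt (a * S ω + (a / 2) ^ 2) - a / 2) ∂P ≤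
        ∫ ω, g (Real.sqrt (at_ * St ω + (at_ / 2) ^ 2) - at_ / 2) ∂P) ∧
    (∀ g : ℝ → ℝ, ConvexOn ℝ Set.univ g →
      Integrable (fun ω => g (S ω - (Real.sqrt (a * S ω + (a / 2) ^ 2) - a / 2))) P →
      Integrable (fun ω => g (St ω - (Real.sqrt (at_ * St ω + (at_ / 2) ^ 2) - at_ / 2))) P →
      ∫ ω, g (S ω - (Real.sqrt (a * S ω + (a / 2) ^ 2) - a / 2)) ∂P ≤
        ∫ ω, g (St ω - (Real.sqrt (at_ * St ω + (at_ / 2) ^ 2) - at_ / 2)) ∂P) := by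
  have hμ := hμt.trans_le hμμt
  have := isProbabilityMeasure_gammaMeasure hμ hl
  have := isProbabilityMeasure_gammaMeasure hμt hlt
  exact stmt_19_general (starLE_gammaMeasure hμt hμμt hl hlt) ae_gammaMeasure_pos
    ae_gammaMeasure_pos (integrable_id_gammaMeasure hμ hl) (integrable_id_gammaMeasure hμt hlt)
    (by rw [integral_id_gammaMeasure hμ hl, integral_id_gammaMeasure hμt hlt, hmean])
    ⟨hSmeas.aemeasurable, hSlaw⟩ ⟨hStmeas.aemeasurable, hStlaw⟩ ha hat
    (hfaira.trans hfairat.symm)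
end
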